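/- arXiv:2110.03838 — 4 statements merged into one kernel-verified Lean document; each statement's English description precedes it below -/
import Mathlib

section
/- Let n ∈ ℕ, p ∈ ℕ₀, and 0 < α < 2. Assume g ∈ C_c^N(ℝ^n) with N ≥ max(2p+4, n+1) and ∂^k g(0) = 0 for all k ∈ ℕ₀^n with |k|₁ ≤ 2p+1 (including k = 0). Then there exists a constant C > 0 such that for all 0 < h ≤ 1: | ∫_{ℝ^n} g(x) s(x) dx − T_h^0[g·s] | ≤ C h^{2p+4−α}. -/
open MeasureTheory Real

noncomputable def euclNorm {n : ℕ} (x : Fin n → ℝ) : ℝ := Real.sqrt (∑ j, x j ^ 2)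

noncomputable def pd {n : ℕ} (j : Fin n) (f : (Fin n → ℝ) → ℝ) : (Fin n → ℝ) → ℝ :=
  fun x => fderiv ℝ f x (Pi.single j 1)

noncomputable def md {n : ℕ} (γ : Fin n → ℕ) (f : (Fin n → ℝ) → ℝ) : (Fin n → ℝ) → ℝ :=
  (List.finRange n).foldr (fun j g => (pd j)^[γ j] g) f

noncomputable def trap {n : ℕ} (h : ℝ) (f : (Fin n → ℝ) → ℝ) : ℝ :=
  h ^ n * ∑' β : {β : Fin n → ℤ // β ≠ 0}, f (fun j => (β.1 j : ℝ) * h)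


open FourierTransform in
lemma poisson_complex (M : ℕ) (hM : 2 ≤ M) (u : ℝ → ℂ) (hu : ContDiff ℝ M u)
    (hc : HasCompactSupport u) :
    ‖(∫ t, u t) - ∑' m : ℤ, u m‖ ≤ (∑' k : ℤ, |(k:ℝ)| ^ (-2:ℝ)) * ∫ t, ‖iteratedDeriv M u t‖ := by
  have hint : ∀ j : ℕ, j ≤ M → Integrable (iteratedDeriv j u) := by
    intro j hj
    apply Continuous.integrable_of_hasCompactSupport
    · exact hu.continuous_iteratedDeriv j (by exact_mod_cast hj)
    · have h1 := hc.iteratedFDeriv (𝕜 := ℝ) j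
      rw [iteratedDeriv_eq_equiv_comp]
      exact h1.comp_left (by simp)
  have hF := Real.fourier_iteratedDeriv (N := (M:ℕ∞)) (n := M) hu
    (fun j hj => hint j (by exact_mod_cast hj)) le_rfl
  set J := ∫ t, ‖iteratedDeriv M u t‖ with hJ
  have hJ0 : 0 ≤ J := integral_nonneg (fun _ => norm_nonneg _)
  have hbd : ∀ k : ℤ, k ≠ 0 → ‖𝓕 u (k:ℝ)‖ ≤ |(k:ℝ)| ^ (-2:ℝ) * J := by
    intro k hk
    have h1 : ‖𝓕 (iteratedDeriv M u) (k:ℝ)‖ ≤ J := by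
      exact VectorFourier.norm_fourierIntegral_le_integral_norm _ _ _ _ _
    rw [hF] at h1
    simp only [norm_smul, norm_pow, norm_mul, Complex.norm_real, Complex.norm_I] at h1
    have hk1 : 1 ≤ |(k:ℝ)| := by exact_mod_cast Int.one_le_abs hk
    have h2 : |(k:ℝ)| ^ (2:ℕ) ≤ (‖(2:ℂ)‖ * ‖π‖ * 1 * ‖(k:ℝ)‖) ^ M := by
      have h3 : |(k:ℝ)| ≤ ‖(2:ℂ)‖ * ‖π‖ * 1 * ‖(k:ℝ)‖ := by
        rw [Real.norm_eq_abs, Real.norm_eq_abs, abs_of_pos pi_pos]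
        simp only [Complex.norm_ofNat]
        nlinarith [pi_gt_three]
      calc _ ≤ |(k:ℝ)| ^ M := pow_le_pow_right₀ hk1 hM
        _ ≤ _ := pow_le_pow_left₀ (abs_nonneg _) h3 M
    have h4 : |(k:ℝ)| ^ (-2:ℝ) = (|(k:ℝ)| ^ (2:ℕ))⁻¹ := by
      rw [Real.rpow_neg (abs_nonneg _)]; norm_cast
    rw [h4, inv_mul_eq_div, le_div_iff₀ (by positivity), mul_comm]
    exact (mul_le_mul_of_nonneg_right h2 (norm_nonneg _)).trans h1
  have hsum2 : Summable fun k : ℤ => |(k:ℝ)| ^ (-2:ℝ) * J :=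
    (Real.summable_abs_int_rpow (by norm_num)).mul_right J
  have hsum : Summable fun k : ℤ => 𝓕 u (k:ℝ) := by
    refine Summable.of_norm_bounded_eventually hsum2 ?_
    refine Set.Finite.subset (Set.finite_singleton (0:ℤ)) ?_
    intro k hk
    by_contra h
    exact hk (hbd k h)
  have hP := Real.tsum_eq_tsum_fourier_of_rpow_decay_of_summable hu.continuous one_lt_two
    (by
      refine Asymptotics.IsBigO.congr' (Asymptotics.isBigO_zero _ _) ?_ Filter.EventuallyEq.rfl
      exact ((hasCompactSupport_iff_eventuallyEq.1 hc).filter_mono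
        Filter.cocompact_le_coclosedCompact).symm) hsum 0
  simp only [zero_add, QuotientAddGroup.mk_zero, fourier_eval_zero, mul_one] at hP
  rw [hP, hsum.tsum_eq_add_tsum_ite 0]
  have h0 : 𝓕 u (((0:ℤ):ℝ)) = ∫ t, u t := by
    rw [Real.fourier_eq]; simp
  rw [h0, sub_add_cancel_left, norm_neg, ← tsum_mul_right]
  refine tsum_of_norm_bounded hsum2.hasSum ?_
  intro k
  split_ifs with h
  · simp; positivity
  · exact hbd k h

lemma poisson_real (M : ℕ) (hM : 2 ≤ M) (u : ℝ → ℝ) (hu : ContDiff ℝ M u)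
    (hc : HasCompactSupport u) :
    |(∫ t, u t) - ∑' m : ℤ, u m| ≤ (∑' k : ℤ, |(k:ℝ)| ^ (-2:ℝ)) * ∫ t, ‖iteratedFDeriv ℝ M u t‖ := by
  have h := poisson_complex M hM (fun t => (u t : ℂ)) (Complex.ofRealCLM.contDiff.comp hu)
    (hc.comp_left (g := fun x : ℝ => (x:ℂ)) (by simp))
  have e : ∀ t, ‖iteratedDeriv M (fun t => (u t : ℂ)) t‖ = ‖iteratedFDeriv ℝ M u t‖ := by
    intro t
    rw [← norm_iteratedFDeriv_eq_norm_iteratedDeriv]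
    exact Complex.ofRealLI.norm_iteratedFDeriv_comp_left hu.contDiffAt le_rfl
  simp only [e] at h
  rw [integral_complex_ofReal, ← Complex.ofReal_tsum, ← Complex.ofReal_sub, Complex.norm_real] at h
  exact h

noncomputable def Zm : Measure ℝ := Measure.map (fun m : ℤ => (m:ℝ)) Measure.count

lemma Zm_emb : MeasurableEmbedding (fun m : ℤ => (m:ℝ)) :=
  Int.isClosedEmbedding_coe_real.measurableEmbedding

instance Zm_sf : SigmaFinite Zm := Zm_emb.sigmaFinite_map

lemma Zm_integrable_iff (u : ℝ → ℝ) : Integrable u Zm ↔ Summable (fun m : ℤ => u m) := by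
  unfold Zm
  rw [Zm_emb.integrable_map_iff, integrable_count_iff]
  exact summable_abs_iff

lemma Zm_integral (u : ℝ → ℝ) (h : Integrable u Zm) : ∫ t, u t ∂Zm = ∑' m : ℤ, u m := by
  have h' : Integrable (fun m : ℤ => u m) Measure.count := by
    unfold Zm at h
    rwa [Zm_emb.integrable_map_iff] at h
  unfold Zm
  rw [Zm_emb.integral_map, integral_countable h']
  simp [measureReal_def]

lemma Zm_pi_integral {n : ℕ} (F : (Fin n → ℝ) → ℝ) (h : Integrable F (Measure.pi fun _ => Zm)) :
    ∫ y, F y ∂(Measure.pi fun _ : Fin n => Zm) = ∑' β : Fin n → ℤ, F (fun j => (β j : ℝ)) := by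
  have e : (Measure.pi fun _ : Fin n => Zm) =
      Measure.map (fun (β : Fin n → ℤ) j => (β j : ℝ)) Measure.count := by
    have hc : (Measure.pi fun _ : Fin n => (Measure.count : Measure ℤ)) = Measure.count := by
      apply Measure.ext_of_singleton
      intro β
      rw [Measure.pi_singleton]
      simp
    rw [← hc]
    unfold Zm
    have : SigmaFinite (Measure.map (fun m : ℤ => (m:ℝ)) Measure.count) := Zm_sf
    rw [Measure.pi_map_pi]
    exact fun i => Zm_emb.measurable.aemeasurable
  have hm : Measurable (fun (β : Fin n → ℤ) j => (β j : ℝ)) := by fun_prop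
  rw [e] at h ⊢
  rw [integral_map hm.aemeasurable h.aestronglyMeasurable]
  have h' := h.comp_measurable hm
  simp only [Function.comp_def] at h'
  rw [integral_countable h']
  simp [measureReal_def]

lemma step {n : ℕ} (M : ℕ) (hM : 2 ≤ M) (w : ℝ → ℝ) (hw0 : ∀ t, 0 ≤ w t)
    (hwZ : Integrable w Zm) (hwV : Integrable w volume)
    (μ ν : Fin (n+1) → Measure ℝ) [∀ i, SigmaFinite (μ i)] [∀ i, SigmaFinite (ν i)]
    (j : Fin (n+1)) (hμ : μ j = volume) (hν : ν j = Zm)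
    (hr : ∀ i, ν (j.succAbove i) = μ (j.succAbove i))
    (hμw : ∀ i, Integrable w (μ i))
    (F : (Fin (n+1) → ℝ) → ℝ) (hF : ContDiff ℝ M F) (hFc : HasCompactSupport F)
    (B : ℝ) (hB : ∀ y, |F y| ≤ B * ∏ i, w (y i))
    (A : ℝ) (hA : ∀ y, ‖iteratedFDeriv ℝ M F y‖ ≤ A * ∏ i, w (y i)) 
    (hiμ : Integrable F (Measure.pi μ)) (hiν : Integrable F (Measure.pi ν)) :
    |∫ y, F y ∂(Measure.pi μ) - ∫ y, F y ∂(Measure.pi ν)| ≤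
      (∑' k : ℤ, |(k:ℝ)| ^ (-2:ℝ)) * (A * ∏ i, ∫ t, w t ∂(μ i)) := by
  set K := ∑' k : ℤ, |(k:ℝ)| ^ (-2:ℝ) with hK
  have hK0 : 0 ≤ K := tsum_nonneg (fun k => by positivity)
  have pμ := (measurePreserving_piFinSuccAbove μ j).symm
  have pν := (measurePreserving_piFinSuccAbove ν j).symm
  have iμ := (pμ.integrable_comp_emb (MeasurableEquiv.measurableEmbedding _)).2 hiμ
  have iν := (pν.integrable_comp_emb (MeasurableEquiv.measurableEmbedding _)).2 hiν
  rw [← pμ.integral_comp', ← pν.integral_comp']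
  simp only [Function.comp_def] at iμ iν
  simp only [hr] at iν ⊢
  rw [hμ] at iμ ⊢
  rw [hν] at iν ⊢
  rw [integral_prod_symm _ iμ, integral_prod_symm _ iν, ← integral_sub iμ.integral_prod_right iν.integral_prod_right]
  have hprod : ∏ i, ∫ t, w t ∂(μ i) = (∫ t, w t) * ∫ z : Fin n → ℝ, ∏ i, w (z i)
      ∂(Measure.pi fun i => μ (j.succAbove i)) := by
    rw [integral_fintype_prod_eq_prod (fun _ => w), Fin.prod_univ_succAbove _ j, hμ]
  rw [hprod, ← Real.norm_eq_abs]
  have hwi : Integrable (fun z : Fin n → ℝ => ∏ i, w (z i)) (Measure.pi fun i => μ (j.succAbove i)) :=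
    Integrable.fintype_prod (fun i => hμw _)
  have : K * (A * ((∫ t, w t) * ∫ z : Fin n → ℝ, ∏ i, w (z i) ∂(Measure.pi fun i => μ (j.succAbove i))))
      = ∫ z : Fin n → ℝ, (K * (A * (∫ t, w t))) * ∏ i, w (z i) ∂(Measure.pi fun i => μ (j.succAbove i)) := by
    rw [integral_const_mul]; ring
  rw [this]
  refine norm_integral_le_of_norm_le (hwi.const_mul _) (Filter.Eventually.of_forall fun z => ?_)
  have hins : ∀ t : ℝ, (MeasurableEquiv.piFinSuccAbove (fun _ => ℝ) j).symm (t, z)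
      = j.insertNth (α := fun _ => ℝ) 0 z + (ContinuousLinearMap.single ℝ (fun _ : Fin (n+1) => ℝ) j) t := by
    intro t
    simp only [MeasurableEquiv.piFinSuccAbove_symm_apply, Fin.insertNthEquiv, Equiv.coe_fn_mk]
    ext i
    refine Fin.succAboveCases j ?_ ?_ i
    · simp
    · intro i; simp
  have hpw : ∀ t : ℝ, ∏ i, w ((MeasurableEquiv.piFinSuccAbove (fun _ => ℝ) j).symm (t, z) i) = w t * ∏ i, w (z i) := by
    intro t
    rw [Fin.prod_univ_succAbove _ j]
    simp [MeasurableEquiv.piFinSuccAbove_symm_apply, Fin.insertNthEquiv]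
  set L := ContinuousLinearMap.single ℝ (fun _ : Fin (n+1) => ℝ) j with hL
  have hLn : ‖L‖ ≤ 1 := by
    refine ContinuousLinearMap.opNorm_le_bound _ zero_le_one (fun t => ?_)
    rw [one_mul, pi_norm_le_iff_of_nonneg (norm_nonneg _)]
    intro i
    by_cases h : i = j
    · subst h; simp [hL]
    · simp [hL, h]
  set c := j.insertNth (α := fun _ => ℝ) 0 z with hc
  set u : ℝ → ℝ := fun t => F ((MeasurableEquiv.piFinSuccAbove (fun _ => ℝ) j).symm (t, z)) with hu
  have hu' : u = (fun y => F (c + y)) ∘ L := by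
    ext t; simp only [hu, hins, Function.comp]
  have hFs : ContDiff ℝ M (fun y => F (c + y)) := hF.comp (contDiff_const.add contDiff_id)
  have huC : ContDiff ℝ M u := by
    rw [hu']; exact hFs.comp L.contDiff
  have hub : ∀ t, |u t| ≤ (B * ∏ i, w (z i)) * w t := by
    intro t
    refine (hB _).trans (le_of_eq ?_)
    rw [hpw]; ring
  have hucs : HasCompactSupport u := by
    rw [hu']
    have h1 : HasCompactSupport (fun y => F (c + y)) := hFc.comp_homeomorph (Homeomorph.addLeft c)
    apply h1.comp_isClosedEmbedding
    apply LinearMap.isClosedEmbedding_of_injective (f := L.toLinearMap)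
    rw [LinearMap.ker_eq_bot]
    intro a b hab
    have := congr_fun hab j
    simpa [hL] using this
  have huZ : Integrable u Zm := by
    refine Integrable.mono' (hwZ.const_mul (B * ∏ i, w (z i))) huC.continuous.aestronglyMeasurable ?_
    exact Filter.Eventually.of_forall hub
  have hder : ∀ t, ‖iteratedFDeriv ℝ M u t‖ ≤ (A * ∏ i, w (z i)) * w t := by
    intro t
    rw [hu', L.iteratedFDeriv_comp_right hFs t le_rfl]
    refine (ContinuousMultilinearMap.norm_compContinuousLinearMap_le _ _).trans ?_
    rw [iteratedFDeriv_comp_add_left]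
    have h2 := hA (c + L t)
    rw [← hins, hpw, hins] at h2
    have h3 : ∏ _i : Fin M, ‖L‖ ≤ 1 := Finset.prod_le_one (fun _ _ => norm_nonneg _) (fun _ _ => hLn)
    calc _ ≤ ‖iteratedFDeriv ℝ M F (c + L t)‖ * 1 := by gcongr
      _ ≤ _ := by rw [mul_one]; refine h2.trans (le_of_eq (by ring))
  have hp := poisson_real M hM u huC hucs
  rw [← Zm_integral u huZ] at hp
  refine hp.trans ?_
  have h4 : ∫ t, ‖iteratedFDeriv ℝ M u t‖ ≤ ∫ t, (A * ∏ i, w (z i)) * w t := by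
    refine integral_mono_of_nonneg (Filter.Eventually.of_forall fun t => norm_nonneg _)
      (hwV.const_mul _) (Filter.Eventually.of_forall hder)
  rw [integral_const_mul] at h4
  calc _ ≤ K * ((A * ∏ i, w (z i)) * ∫ t, w t) := by gcongr
    _ = _ := by ring

lemma multi {n : ℕ} (M : ℕ) (hM : 2 ≤ M) (w : ℝ → ℝ) (hw0 : ∀ t, 0 < w t) (hwc : Continuous w)
    (hwZ : Integrable w Zm) (hwV : Integrable w volume) :
    ∃ K : ℝ, 0 ≤ K ∧ ∀ (F : (Fin (n+1) → ℝ) → ℝ) (A : ℝ), ContDiff ℝ M F → HasCompactSupport F →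
      0 ≤ A → (∀ y, ‖iteratedFDeriv ℝ M F y‖ ≤ A * ∏ i, w (y i)) →
      |(∫ y, F y) - ∑' β : Fin (n+1) → ℤ, F (fun j => (β j : ℝ))| ≤ K * A := by
  set ν : ℕ → Fin (n+1) → Measure ℝ := fun k i => if i.val < k then Zm else volume with hν
  have hsf : ∀ k i, SigmaFinite (ν k i) := by
    intro k i; simp only [hν]; split_ifs <;> infer_instance
  have hwi : ∀ k i, Integrable w (ν k i) := by
    intro k i; simp only [hν]; split_ifs <;> assumption
  refine ⟨∑ k ∈ Finset.range (n+1), (∑' k : ℤ, |(k:ℝ)| ^ (-2:ℝ)) * (∏ i, ∫ t, w t ∂(ν k i)), ?_, ?_⟩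
  · refine Finset.sum_nonneg fun k _ => mul_nonneg (tsum_nonneg fun k => by positivity) ?_
    exact Finset.prod_nonneg fun i _ => integral_nonneg fun t => (hw0 t).le
  intro F A hF hFc hA0 hA
  obtain ⟨B, hB⟩ : ∃ B, ∀ y, |F y| ≤ B * ∏ i, w (y i) := by
    have hpos : ∀ y : Fin (n+1) → ℝ, 0 < ∏ i, w (y i) := fun y => Finset.prod_pos fun i _ => hw0 _
    have hcont : Continuous (fun y => F y * (∏ i, w (y i))⁻¹) :=
      hF.continuous.mul (Continuous.inv₀ (by fun_prop) (fun y => (hpos y).ne'))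
    have hcs : HasCompactSupport (fun y => F y * (∏ i, w (y i))⁻¹) := hFc.mul_right
    obtain ⟨B, hB⟩ := hcont.bounded_above_of_compact_support hcs
    refine ⟨B, fun y => ?_⟩
    have := hB y
    rw [norm_mul, norm_inv, Real.norm_eq_abs, Real.norm_eq_abs, abs_of_pos (hpos y), ← div_eq_mul_inv,
      div_le_iff₀ (hpos y)] at this
    exact this
  have hint : ∀ k, Integrable F (Measure.pi (ν k)) := by
    intro k
    refine Integrable.mono' ((Integrable.fintype_prod (f := fun _ => w) (hwi k)).const_mul B) hF.continuous.aestronglyMeasurable ?_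
    exact Filter.Eventually.of_forall hB
  have h0 : ∫ y, F y = ∫ y, F y ∂(Measure.pi (ν 0)) := by
    have : ν 0 = fun _ => volume := by ext1 i; simp [hν]
    rw [this]; rfl
  have hn : ∑' β : Fin (n+1) → ℤ, F (fun j => (β j : ℝ)) = ∫ y, F y ∂(Measure.pi (ν (n+1))) := by
    have : ν (n+1) = fun _ => Zm := by ext1 i; simp only [hν, i.isLt, if_true]
    have h2 := hint (n+1)
    rw [this] at h2 ⊢
    exact (Zm_pi_integral F h2).symm
  rw [h0, hn, ← Finset.sum_range_sub' (fun k => ∫ y, F y ∂(Measure.pi (ν k))), Finset.sum_mul]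
  refine (Finset.abs_sum_le_sum_abs _ _).trans (Finset.sum_le_sum fun k hk => ?_)
  have hk' : k < n + 1 := Finset.mem_range.1 hk
  have := step M hM w (fun t => (hw0 t).le) hwZ hwV (ν k) (ν (k+1)) ⟨k, hk'⟩ (by simp [hν]) (by simp [hν])
    (by
      intro i
      have hne : ((⟨k, hk'⟩ : Fin (n+1)).succAbove i).val ≠ k := fun h =>
        Fin.succAbove_ne (⟨k, hk'⟩ : Fin (n+1)) i (Fin.ext h)
      simp only [hν]
      have : ((⟨k, hk'⟩ : Fin (n+1)).succAbove i).val < k + 1 ↔ ((⟨k, hk'⟩ : Fin (n+1)).succAbove i).val < k := by omega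
      simp only [this])
    (hwi k) F hF hFc B hB A hA (hint k) (hint (k+1))
  refine this.trans (le_of_eq (by ring))

lemma contDiff_pd {n : ℕ} (m : ℕ) (j : Fin n) (f : (Fin n → ℝ) → ℝ)
    (hf : ContDiff ℝ ((m+1 : ℕ)) f) : ContDiff ℝ m (pd j f) := by
  unfold pd
  exact (hf.fderiv_right (by norm_cast)).clm_apply contDiff_const

lemma pd_comm {n : ℕ} (i j : Fin n) (f : (Fin n → ℝ) → ℝ) (hf : ContDiff ℝ 2 f) :
    pd i (pd j f) = pd j (pd i f) := by
  ext x
  have hd : DifferentiableAt ℝ (fderiv ℝ f) x :=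
    ((hf.fderiv_right (m := 1) (by norm_cast)).differentiable (by norm_num)) x
  have key : ∀ v w : Fin n → ℝ, fderiv ℝ (fun y => fderiv ℝ f y v) x w = fderiv ℝ (fderiv ℝ f) x w v := by
    intro v w
    rw [fderiv_clm_apply hd (differentiableAt_const _)]
    simp
  have hs : IsSymmSndFDerivAt ℝ f x := hf.contDiffAt.isSymmSndFDerivAt (by simp)
  unfold pd
  rw [key, key]
  exact hs _ _

lemma contDiff_W {n : ℕ} (g : (Fin n → ℝ) → ℝ) (l : List (Fin n)) (k m : ℕ) (h : l.length + k ≤ m)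
    (hg : ContDiff ℝ m g) : ContDiff ℝ k (l.foldr pd g) := by
  induction l generalizing k with
  | nil => exact hg.of_le (by exact_mod_cast (by simpa using h))
  | cons a l ih =>
    simp only [List.foldr_cons]
    exact contDiff_pd k a _ (ih (k+1) (by simp at h; omega))

lemma W_perm {n : ℕ} (g : (Fin n → ℝ) → ℝ) (m : ℕ) (hg : ContDiff ℝ m g) {l l' : List (Fin n)}
    (h : l.Perm l') (hl : l.length ≤ m) : l.foldr pd g = l'.foldr pd g := by
  induction h with
  | nil => rfl
  | cons a _ ih => simp only [List.foldr_cons]; rw [ih (by simp at hl; omega)]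
  | swap a b l =>
    simp only [List.foldr_cons]
    exact pd_comm _ _ _ (contDiff_W g l 2 m (by simp at hl; omega) hg)
  | trans h1 _ ih1 ih2 => rw [ih1 hl, ih2 (by rw [← h1.length_eq]; exact hl)]

lemma md_eq {n : ℕ} (γ : Fin n → ℕ) (g : (Fin n → ℝ) → ℝ) :
    md γ g = ((List.finRange n).flatMap fun j => List.replicate (γ j) j).foldr pd g := by
  unfold md
  induction List.finRange n with
  | nil => rfl
  | cons a l ih =>
    rw [List.foldr_cons, List.flatMap_cons, List.foldr_append, ← ih]
    generalize l.foldr _ g = f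
    induction γ a with
    | zero => rfl
    | succ k ih => rw [Function.iterate_succ_apply', List.replicate_succ, List.foldr_cons, ih]

lemma W_zero {n : ℕ} (g : (Fin n → ℝ) → ℝ) (m q : ℕ) (hg : ContDiff ℝ m g) (hq : q ≤ m)
    (hgd : ∀ k : Fin n → ℕ, ∑ j, k j ≤ q → md k g 0 = 0) (l : List (Fin n)) (hl : l.length ≤ q) :
    l.foldr pd g 0 = 0 := by
  have hp : l.Perm ((List.finRange n).flatMap fun j => List.replicate (l.count j) j) := by
    rw [List.perm_iff_count]
    intro a
    rw [List.count_flatMap]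
    have : (List.count a ∘ fun j => List.replicate (List.count j l) j) = fun j => if j = a then List.count a l else 0 := by
      ext j
      simp only [Function.comp, List.count_replicate, beq_iff_eq]
      split_ifs with h <;> simp [h]
    rw [this, ← List.ofFn_eq_map, List.sum_ofFn]
    simp
  rw [W_perm g m hg hp (hl.trans hq), ← md_eq]
  apply hgd
  have := List.sum_toFinset_count_eq_length l
  refine le_trans (le_of_eq ?_) hl
  rw [← this]
  symm
  apply Finset.sum_subset (Finset.subset_univ _)
  intro x _ hx
  simpa [List.count_eq_zero] using hx

lemma iter_eq_W {n : ℕ} (g : (Fin n → ℝ) → ℝ) (k : ℕ) (hg : ContDiff ℝ k g) (i : Fin k → Fin n) (x) :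
    iteratedFDeriv ℝ k g x (fun a => Pi.single (i a) 1) = (List.ofFn i).foldr pd g x := by
  induction k generalizing x with
  | zero => simp
  | succ k ih =>
    rw [iteratedFDeriv_succ_apply_left, List.ofFn_succ, List.foldr_cons]
    have hd : DifferentiableAt ℝ (iteratedFDeriv ℝ k g) x :=
      hg.contDiffAt.differentiableAt_iteratedFDeriv (by norm_cast; omega)
    have e : (List.ofFn fun a => i a.succ).foldr pd g =
        fun y => iteratedFDeriv ℝ k g y (fun a => Pi.single (i a.succ) 1) := by
      ext y
      exact (ih (hg.of_le (by norm_cast; omega)) _ y).symm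
    rw [e]
    unfold pd
    let ev := ContinuousMultilinearMap.apply ℝ (fun _ : Fin k => Fin n → ℝ) ℝ
      (fun a => Pi.single (i a.succ) 1)
    have h2 : HasFDerivAt (fun y => ev (iteratedFDeriv ℝ k g y)) (ev.comp (fderiv ℝ (iteratedFDeriv ℝ k g) x)) x :=
      ev.hasFDerivAt.comp x hd.hasFDerivAt
    have h3 := h2.fderiv
    simp only [ev, ContinuousMultilinearMap.apply_apply] at h3
    rw [h3]
    rfl

lemma iter_zero {n : ℕ} (g : (Fin n → ℝ) → ℝ) (m q : ℕ) (hg : ContDiff ℝ m g) (hq : q ≤ m)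
    (hgd : ∀ k : Fin n → ℕ, ∑ j, k j ≤ q → md k g 0 = 0) (k : ℕ) (hk : k ≤ q) :
    iteratedFDeriv ℝ k g 0 = 0 := by
  apply ContinuousMultilinearMap.toMultilinearMap_injective
  refine Module.Basis.ext_multilinear (fun _ => Pi.basisFun ℝ (Fin n)) fun i => ?_
  have := iter_eq_W g k (hg.of_le (by norm_cast; omega)) i 0
  rw [W_zero g m q hg hq hgd _ (by simpa using hk)] at this
  simpa using this

lemma g_bound {n : ℕ} (g : (Fin n → ℝ) → ℝ) (m q : ℕ) (hg : ContDiff ℝ m g) (hq : q + 1 ≤ m)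
    (hgc : HasCompactSupport g)
    (hgd : ∀ k : Fin n → ℕ, ∑ j, k j ≤ q → md k g 0 = 0) (k : ℕ) (hk : k ≤ m) :
    ∃ C : ℝ, 0 ≤ C ∧ ∀ x, ‖iteratedFDeriv ℝ k g x‖ * ‖x‖ ^ k ≤ C * ‖x‖ ^ (q+1) := by
  have hcont : ∀ k ≤ m, Continuous (iteratedFDeriv ℝ k g) := fun k hk =>
    hg.continuous_iteratedFDeriv (by exact_mod_cast hk)
  by_cases hkq : k ≤ q + 1
  · have claim : ∀ d ≤ q + 1, ∃ C : ℝ, 0 ≤ C ∧ ∀ x, ‖iteratedFDeriv ℝ (q+1-d) g x‖ ≤ C * ‖x‖ ^ d := by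
      intro d
      induction d with
      | zero =>
        intro _
        obtain ⟨C, hC⟩ := (hcont (q+1) hq).bounded_above_of_compact_support (hgc.iteratedFDeriv _)
        refine ⟨C, (norm_nonneg _).trans (hC 0), fun x => by simpa using hC x⟩
      | succ d ih =>
        intro hd
        obtain ⟨C, hC0, hC⟩ := ih (by omega)
        refine ⟨C, hC0, fun x => ?_⟩
        have hkk : q + 1 - d = (q + 1 - (d+1)) + 1 := by omega
        rw [hkk] at hC
        set j := q + 1 - (d+1) with hj
        have hdiff : ∀ y, DifferentiableAt ℝ (iteratedFDeriv ℝ j g) y := fun y =>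
          hg.contDiffAt.differentiableAt_iteratedFDeriv (by norm_cast; omega)
        have := (convex_closedBall (0 : Fin n → ℝ) ‖x‖).norm_image_sub_le_of_norm_fderiv_le
          (f := iteratedFDeriv ℝ j g) (C := C * ‖x‖ ^ d) (fun y _ => hdiff y)
          (fun y hy => by
            rw [norm_fderiv_iteratedFDeriv]
            refine (hC y).trans ?_
            have : ‖y‖ ≤ ‖x‖ := by simpa using hy
            gcongr) (x := 0) (y := x) (by simp) (by simp)
        rw [iter_zero g m q hg (by omega) hgd j (by omega), sub_zero, sub_zero] at this
        rw [pow_succ, ← mul_assoc]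
        exact this
    obtain ⟨C, hC0, hC⟩ := claim (q+1-k) (by omega)
    refine ⟨C, hC0, fun x => ?_⟩
    have h1 := hC x
    have h2 : q + 1 - (q+1-k) = k := by omega
    rw [h2] at h1
    calc _ ≤ C * ‖x‖ ^ (q+1-k) * ‖x‖ ^ k := by gcongr
      _ = _ := by rw [mul_assoc, ← pow_add]; congr 2; omega
  · push Not at hkq
    have hc2 : Continuous fun x => ‖iteratedFDeriv ℝ k g x‖ * ‖x‖ ^ (k - (q+1)) := by
      have := hcont k hk
      fun_prop
    obtain ⟨C, hC⟩ := hc2.bounded_above_of_compact_support ((hgc.iteratedFDeriv (𝕜 := ℝ) k).norm.mul_right)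
    refine ⟨C, (norm_nonneg _).trans (hC 0), fun x => ?_⟩
    have h1 := (le_abs_self _).trans (hC x)
    calc _ = (‖iteratedFDeriv ℝ k g x‖ * ‖x‖ ^ (k - (q+1))) * ‖x‖ ^ (q+1) := by
          rw [mul_assoc, ← pow_add]; congr 2; omega
      _ ≤ _ := by gcongr

noncomputable def sK {n : ℕ} (i0 : Fin n) (E : ℝ) (x : Fin n → ℝ) : ℝ := x i0 ^ 2 / euclNorm x ^ E

lemma eucl_nonneg {n : ℕ} (x : Fin n → ℝ) : 0 ≤ euclNorm x := Real.sqrt_nonneg _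

lemma norm_le_eucl {n : ℕ} (x : Fin n → ℝ) : ‖x‖ ≤ euclNorm x := by
  rw [pi_norm_le_iff_of_nonneg (eucl_nonneg x)]
  intro i
  unfold euclNorm
  rw [Real.norm_eq_abs]
  apply Real.abs_le_sqrt
  exact Finset.single_le_sum (f := fun j => x j ^ 2) (fun j _ => sq_nonneg _) (Finset.mem_univ i)

lemma eucl_smul {n : ℕ} (c : ℝ) (hc : 0 < c) (x : Fin n → ℝ) : euclNorm (c • x) = c * euclNorm x := by
  unfold euclNorm
  simp only [Pi.smul_apply, smul_eq_mul, mul_pow]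
  rw [← Finset.mul_sum, Real.sqrt_mul (sq_nonneg c), Real.sqrt_sq hc.le]

lemma sK_smul {n : ℕ} (i0 : Fin n) (E c : ℝ) (hc : 0 < c) (x : Fin n → ℝ) :
    sK i0 E (c • x) = c ^ (2 - E) * sK i0 E x := by
  unfold sK
  rw [eucl_smul c hc, Real.mul_rpow hc.le (eucl_nonneg x), Real.rpow_sub hc]
  simp only [Pi.smul_apply, smul_eq_mul, mul_pow]
  rw [mul_div_mul_comm]
  norm_cast

lemma sK_bound {n : ℕ} (i0 : Fin n) (E : ℝ) (hE : 0 ≤ E) (x : Fin n → ℝ) (hx : x ≠ 0) :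
    |sK i0 E x| ≤ ‖x‖ ^ 2 * ‖x‖ ^ (-E) := by
  have h0 : 0 < ‖x‖ := norm_pos_iff.2 hx
  have h1 := norm_le_eucl x
  have h2 : 0 < euclNorm x := h0.trans_le h1
  unfold sK
  rw [abs_div, abs_pow, abs_of_pos (Real.rpow_pos_of_pos h2 E), Real.rpow_neg h0.le, ← div_eq_mul_inv]
  have := norm_le_pi_norm x i0
  rw [Real.norm_eq_abs] at this
  gcongr

lemma sK_contDiffAt {n : ℕ} (m : ℕ) (i0 : Fin n) (E : ℝ) (x : Fin n → ℝ) (hx : x ≠ 0) :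
    ContDiffAt ℝ m (sK i0 E) x := by
  have h2 : 0 < euclNorm x := (norm_pos_iff.2 hx).trans_le (norm_le_eucl x)
  have h3 : ∑ j, x j ^ 2 ≠ 0 := by
    intro h
    unfold euclNorm at h2
    rw [h] at h2; simp at h2
  have he : ContDiffAt ℝ m (euclNorm (n := n)) x := by
    unfold euclNorm
    exact ContDiffAt.sqrt (by fun_prop) h3
  unfold sK
  refine ContDiffAt.div (by fun_prop) (he.rpow_const_of_ne h2.ne') (Real.rpow_pos_of_pos h2 E).ne'

noncomputable def chi (n : ℕ) : ContDiffBump (0 : Fin n → ℝ) := ⟨1/4, 1/2, by norm_num, by norm_num⟩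

noncomputable def SK {n : ℕ} (i0 : Fin n) (E : ℝ) (x : Fin n → ℝ) : ℝ := (1 - chi n x) * sK i0 E x

lemma SK_near {n : ℕ} (i0 : Fin n) (E : ℝ) (x : Fin n → ℝ) (hx : ‖x‖ ≤ 1/4) : SK i0 E x = 0 := by
  unfold SK
  rw [(chi n).one_of_mem_closedBall (by simpa [chi] using hx)]; simp

lemma SK_far {n : ℕ} (i0 : Fin n) (E : ℝ) (x : Fin n → ℝ) (hx : 1/2 ≤ ‖x‖) : SK i0 E x = sK i0 E x := by
  unfold SK
  rw [(chi n).zero_of_le_dist (by simpa [chi] using hx)]; simp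

lemma SK_evz {n : ℕ} (i0 : Fin n) (E : ℝ) (x : Fin n → ℝ) (hx : ‖x‖ < 1/4) :
    SK i0 E =ᶠ[nhds x] fun _ => 0 := by
  filter_upwards [(isOpen_lt continuous_norm continuous_const).mem_nhds hx] with y hy
  exact SK_near i0 E y (le_of_lt hy)

lemma SK_contDiff {n : ℕ} (m : ℕ) (i0 : Fin n) (E : ℝ) : ContDiff ℝ m (SK i0 E) := by
  rw [contDiff_iff_contDiffAt]
  intro x
  by_cases hx : x = 0
  · exact contDiffAt_const.congr_of_eventuallyEq (SK_evz i0 E x (by rw [hx]; simp))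
  · exact (contDiffAt_const.sub (chi n).contDiffAt).mul (sK_contDiffAt m i0 E x hx)

lemma SK_bound {n : ℕ} (i0 : Fin n) (E : ℝ) (hE : 0 ≤ E) (k : ℕ) :
    ∃ C : ℝ, 0 ≤ C ∧ ∀ y, ‖iteratedFDeriv ℝ k (SK i0 E) y‖ * ‖y‖ ^ k ≤
      C * (‖y‖ ^ 2 * (1 + ‖y‖) ^ (-E)) := by
  have hcont : Continuous (iteratedFDeriv ℝ k (SK i0 E)) :=
    (SK_contDiff k i0 E).continuous_iteratedFDeriv le_rfl
  obtain ⟨C1, hC1⟩ := (isCompact_closedBall (0 : Fin n → ℝ) 1).exists_bound_of_continuousOn hcont.continuousOn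
  have hC10 : 0 ≤ C1 := (norm_nonneg _).trans (hC1 0 (by simp))
  have h2E : (1:ℝ) ≤ 2 ^ E := Real.one_le_rpow (by norm_num) hE
  refine ⟨C1 * (16 * 2 ^ E), by positivity, fun y => ?_⟩
  rcases lt_or_ge ‖y‖ (1/4) with h | h
  · rw [((SK_evz i0 E y h).iteratedFDeriv ℝ k).eq_of_nhds]
    have : iteratedFDeriv ℝ k (fun _ : Fin n → ℝ => (0:ℝ)) y = 0 := by
      exact congr_fun iteratedFDeriv_fun_zero y
    rw [this, norm_zero, zero_mul]
    positivity
  have hy0 : 0 < ‖y‖ := by linarith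
  rcases le_or_gt ‖y‖ 1 with h1 | h1
  · have a1 : ‖iteratedFDeriv ℝ k (SK i0 E) y‖ ≤ C1 := hC1 y (by simpa using h1)
    have a2 : ‖y‖ ^ k ≤ 1 := pow_le_one₀ hy0.le h1
    have a3 : (1:ℝ) ≤ 2 ^ E * (1 + ‖y‖) ^ (-E) := by
      rw [Real.rpow_neg (by positivity), ← div_eq_mul_inv, one_le_div (by positivity)]
      gcongr; linarith
    have a4 : 1 ≤ 16 * ‖y‖ ^ 2 := by nlinarith
    calc _ ≤ C1 * 1 := by gcongr
      _ ≤ C1 * ((16 * ‖y‖ ^ 2) * (2 ^ E * (1 + ‖y‖) ^ (-E))) := by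
          gcongr
          exact one_le_mul_of_one_le_of_one_le a4 a3
      _ = _ := by ring
  · set c := ‖y‖ with hc
    set z := c⁻¹ • y with hz
    have hcz : c • z = y := by rw [hz, smul_smul, mul_inv_cancel₀ hy0.ne', one_smul]
    have hzn : ‖z‖ = 1 := by rw [hz, norm_smul, norm_inv, norm_norm, inv_mul_cancel₀ hy0.ne']
    have e1 : iteratedFDeriv ℝ k (fun x => SK i0 E (c • x)) z = c ^ k • iteratedFDeriv ℝ k (SK i0 E) y := by
      rw [iteratedFDeriv_comp_const_smul c (SK_contDiff k i0 E)]
      simp only [hcz]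
    have e2 : (fun x => SK i0 E (c • x)) =ᶠ[nhds z] fun x => c ^ (2 - E) • SK i0 E x := by
      have : (1/2:ℝ) < ‖z‖ := by rw [hzn]; norm_num
      filter_upwards [(isOpen_lt continuous_const continuous_norm).mem_nhds this] with x hx
      have hx' : 1/2 < ‖x‖ := hx
      rw [SK_far i0 E x hx'.le, SK_far, sK_smul i0 E c hy0, smul_eq_mul]
      rw [norm_smul, norm_norm]; nlinarith
    have e3 : iteratedFDeriv ℝ k (fun x => SK i0 E (c • x)) z = c ^ (2 - E) • iteratedFDeriv ℝ k (SK i0 E) z := by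
      rw [(e2.iteratedFDeriv ℝ k).eq_of_nhds]
      exact iteratedFDeriv_const_smul_apply' (SK_contDiff k i0 E).contDiffAt
    have e4 : ‖iteratedFDeriv ℝ k (SK i0 E) y‖ * c ^ k = c ^ (2 - E) * ‖iteratedFDeriv ℝ k (SK i0 E) z‖ := by
      rw [e1] at e3
      have := congr_arg norm e3
      rw [norm_smul, norm_smul, Real.norm_of_nonneg (by positivity), Real.norm_of_nonneg (by positivity)] at this
      rw [← this]; ring
    rw [e4]
    have a1 : ‖iteratedFDeriv ℝ k (SK i0 E) z‖ ≤ C1 := hC1 z (by simp [hzn])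
    have a2 : c ^ (2 - E) = c ^ 2 * c ^ (-E) := by
      rw [sub_eq_add_neg, Real.rpow_add hy0]; norm_cast
    have a3 : c ^ (-E) ≤ 2 ^ E * (1 + c) ^ (-E) := by
      rw [Real.rpow_neg hy0.le, Real.rpow_neg (by positivity), ← div_eq_mul_inv, le_div_iff₀ (by positivity),
        inv_mul_le_iff₀ (by positivity), ← Real.mul_rpow hy0.le (by norm_num)]
      gcongr; linarith
    rw [a2]
    calc _ ≤ c ^ 2 * (2 ^ E * (1 + c) ^ (-E)) * C1 := by gcongr
      _ ≤ 16 * (c ^ 2 * (2 ^ E * (1 + c) ^ (-E)) * C1) := by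
          have : 0 ≤ c ^ 2 * (2 ^ E * (1 + c) ^ (-E)) * C1 := by positivity
          linarith
      _ = _ := by ring

lemma wt_bound {n : ℕ} (E r : ℝ) (hr0 : 0 ≤ r) (hr : r * (n+1) = E) (y : Fin (n+1) → ℝ) :
    (1 + ‖y‖) ^ (-E) ≤ ∏ i, (1 + |y i|) ^ (-r) := by
  have h1 : (1 + ‖y‖) ^ (-E) = ∏ _i : Fin (n+1), (1 + ‖y‖) ^ (-r) := by
    rw [Finset.prod_const, Finset.card_univ, Fintype.card_fin, ← Real.rpow_mul_natCast (by positivity), ← hr]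
    push_cast; ring_nf
  rw [h1]
  refine Finset.prod_le_prod (fun i _ => by positivity) fun i _ => ?_
  have := norm_le_pi_norm y i
  rw [Real.norm_eq_abs] at this
  exact Real.rpow_le_rpow_of_nonpos (by positivity) (by linarith) (by linarith)

lemma wt_Zm (r : ℝ) (hr : 1 < r) : Integrable (fun t : ℝ => (1 + |t|) ^ (-r)) Zm := by
  rw [Zm_integrable_iff]
  refine Summable.of_norm_bounded_eventually (Real.summable_abs_int_rpow hr) ?_
  refine Set.Finite.subset (Set.finite_singleton (0:ℤ)) ?_
  intro k hk
  by_contra h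
  apply hk
  have hk1 : 0 < |(k:ℝ)| := by
    have : k ≠ 0 := h
    positivity
  change ‖(1 + |(k:ℝ)|) ^ (-r)‖ ≤ |(k:ℝ)| ^ (-r)
  rw [Real.norm_of_nonneg (by positivity)]
  exact Real.rpow_le_rpow_of_nonpos hk1 (by linarith) (by linarith)

lemma main_est (n p : ℕ) (α : ℝ) (hα0 : 0 < α) (hα2 : α < 2) (i0 : Fin (n+1)) (E : ℝ) (hE : E = n + 1 + α)
    (g : (Fin (n+1) → ℝ) → ℝ) (hg : ContDiff ℝ (2*p+4 : ℕ) g) (hgc : HasCompactSupport g)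
    (hgd : ∀ k : Fin (n+1) → ℕ, ∑ j, k j ≤ 2 * p + 1 → md k g 0 = 0) :
    ∃ C > (0:ℝ), ∀ h : ℝ, 0 < h →
      |(∫ y, (h ^ (2*p+2))⁻¹ * g (h • y) * sK i0 E y) -
        ∑' β : {β : Fin (n+1) → ℤ // β ≠ 0}, (h ^ (2*p+2))⁻¹ * g (h • fun j => (β.1 j : ℝ)) *
          sK i0 E (fun j => (β.1 j : ℝ))| ≤ C := by
  have hE0 : 0 ≤ E := by rw [hE]; positivity
  set M := 2*p+4 with hM
  set r := E / (n+1) with hr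
  have hr1 : 1 < r := by rw [hr, one_lt_div (by positivity), hE]; linarith
  have hrE : r * (n+1) = E := by rw [hr]; field_simp
  choose Cg hCg0 hCg using fun k : Fin (M+1) =>
    g_bound g M (2*p+1) hg (by omega) hgc hgd k (by omega)
  choose CS hCS0 hCS using fun k : ℕ => SK_bound i0 E hE0 k
  obtain ⟨K, hK0, hK⟩ := multi (n := n) M (by omega) (fun t : ℝ => (1 + |t|) ^ (-r))
    (fun t => by positivity)
    (by
      refine Continuous.rpow_const (by fun_prop) (fun t => Or.inl ?_)
      positivity)
    (wt_Zm r hr1) (by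
      have := integrable_one_add_norm (E := ℝ) (μ := volume) (r := r) (by simpa using hr1)
      simpa using this)
  -- scaled function
  set G : ℝ → (Fin (n+1) → ℝ) → ℝ := fun h y => (h ^ (2*p+2))⁻¹ * g (h • y) with hG
  have hGC : ∀ h, ContDiff ℝ M (G h) := fun h =>
    contDiff_const.mul (hg.comp (contDiff_const_smul h))
  have hGb : ∀ h, 0 < h → ∀ (k : Fin (M+1)) y, ‖iteratedFDeriv ℝ k (G h) y‖ * ‖y‖ ^ (k:ℕ) ≤
      Cg k * ‖y‖ ^ (2*p+2) := by
    intro h hh k y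
    have hgk : ContDiff ℝ (k:ℕ) g := hg.of_le (by exact_mod_cast (by omega))
    have e : iteratedFDeriv ℝ k (G h) y = (h ^ (2*p+2))⁻¹ • (h ^ (k:ℕ) • iteratedFDeriv ℝ k g (h • y)) := by
      have e1 : iteratedFDeriv ℝ k (G h) y = (h ^ (2*p+2))⁻¹ • iteratedFDeriv ℝ k (fun y => g (h • y)) y :=
        iteratedFDeriv_const_smul_apply' (f := fun y => g (h • y)) (a := (h ^ (2*p+2))⁻¹)
          (hgk.comp (contDiff_const_smul h)).contDiffAt
      rw [e1, iteratedFDeriv_comp_const_smul h hgk]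
    rw [e, norm_smul, norm_smul, Real.norm_of_nonneg (by positivity), Real.norm_of_nonneg (by positivity)]
    have h1 := hCg k (h • y)
    rw [norm_smul, Real.norm_of_nonneg hh.le, mul_pow, mul_pow] at h1
    have h2 : (h ^ (2*p+2))⁻¹ * (‖iteratedFDeriv ℝ k g (h • y)‖ * (h ^ (k:ℕ) * ‖y‖ ^ (k:ℕ))) ≤
        (h ^ (2*p+2))⁻¹ * (Cg k * (h ^ (2*p+1+1) * ‖y‖ ^ (2*p+1+1))) := by gcongr
    calc _ = (h ^ (2*p+2))⁻¹ * (‖iteratedFDeriv ℝ k g (h • y)‖ * (h ^ (k:ℕ) * ‖y‖ ^ (k:ℕ))) := by ring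
      _ ≤ _ := h2
      _ = _ := by field_simp
  have hGcs : ∀ h, 0 < h → HasCompactSupport (G h) := fun h hh =>
    (hgc.comp_smul hh.ne').mul_left
  set A : ℝ := ∑ i ∈ Finset.range (M+1), (M.choose i : ℝ) * (if hi : i < M+1 then Cg ⟨i, hi⟩ else 0) * CS (M - i) with hA
  have hA0 : 0 ≤ A := by
    refine Finset.sum_nonneg fun i _ => ?_
    have := hCS0 (M - i)
    split_ifs with hi
    · have := hCg0 ⟨i, hi⟩
      positivity
    · simp
  have hFd : ∀ h, 0 < h → ∀ y, ‖iteratedFDeriv ℝ M (fun y => G h y * SK i0 E y) y‖ ≤ A * ∏ i, (1 + |y i|) ^ (-r) := by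
    intro h hh y
    refine le_trans ?_ (mul_le_mul_of_nonneg_left (wt_bound E r (by linarith) hrE y) hA0)
    rcases lt_or_ge ‖y‖ (1/4) with hy | hy
    · have hz : (fun y => G h y * SK i0 E y) =ᶠ[nhds y] fun _ => 0 := by
        filter_upwards [SK_evz i0 E y hy] with x hx
        rw [hx, mul_zero]
      rw [(hz.iteratedFDeriv ℝ M).eq_of_nhds]
      have : iteratedFDeriv ℝ M (fun _ : Fin (n+1) → ℝ => (0:ℝ)) y = 0 := 
        congr_fun iteratedFDeriv_fun_zero y
      rw [this, norm_zero]
      positivity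
    have hy0 : 0 < ‖y‖ := by linarith
    have hL := norm_iteratedFDeriv_mul_le (𝕜 := ℝ) (hGC h) (SK_contDiff M i0 E) y (n := M) le_rfl
    have hpos : 0 < ‖y‖ ^ M := by positivity
    refine le_of_mul_le_mul_right ?_ hpos
    refine (mul_le_mul_of_nonneg_right hL hpos.le).trans ?_
    rw [hA, Finset.sum_mul, Finset.sum_mul, Finset.sum_mul]
    refine Finset.sum_le_sum fun i hi => ?_
    have hi' : i < M + 1 := Finset.mem_range.1 hi
    rw [dif_pos hi']
    have b1 := hGb h hh ⟨i, hi'⟩ y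
    have b2 := hCS (M - i) y
    simp only at b1
    have hyM : ‖y‖ ^ M = ‖y‖ ^ i * ‖y‖ ^ (M - i) := by rw [← pow_add]; congr 1; omega
    have hyM2 : ‖y‖ ^ M = ‖y‖ ^ (2*p+2) * ‖y‖ ^ 2 := by rw [← pow_add]
    have c1 := hCg0 ⟨i, hi'⟩
    calc _ = (M.choose i : ℝ) * ((‖iteratedFDeriv ℝ i (G h) y‖ * ‖y‖ ^ i) *
          (‖iteratedFDeriv ℝ (M - i) (SK i0 E) y‖ * ‖y‖ ^ (M - i))) := by rw [hyM]; ring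
      _ ≤ (M.choose i : ℝ) * ((Cg ⟨i, hi'⟩ * ‖y‖ ^ (2*p+2)) * (CS (M-i) * (‖y‖ ^ 2 * (1 + ‖y‖) ^ (-E)))) := by
          gcongr
      _ = _ := by rw [hyM2]; ring
  -- near part
  set I : ℝ := ∫ y in Metric.ball (0 : Fin (n+1) → ℝ) 1, ‖y‖ ^ (-(n:ℝ)) with hI
  have hIi : IntegrableOn (fun y : Fin (n+1) → ℝ => ‖y‖ ^ (-(n:ℝ))) (Metric.ball 0 1) volume := by
    rw [integrableOn_fun_norm_addHaar volume (f := fun t : ℝ => t ^ (-(n:ℝ)))]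
    have : IntegrableOn (fun _ : ℝ => (1:ℝ)) (Set.Ioo 0 1) := by simp
    refine this.congr_fun (fun t ht => ?_) measurableSet_Ioo
    have ht0 : 0 < t := ht.1
    simp only [Module.finrank_fintype_fun_eq_card, Fintype.card_fin, Nat.add_sub_cancel, smul_eq_mul]
    rw [Real.rpow_neg ht0.le, Real.rpow_natCast, mul_inv_cancel₀ (by positivity)]
  set C0 := Cg ⟨0, by omega⟩ with hC0
  have hC00 : 0 ≤ C0 := hCg0 _
  have hnear : ∀ h, 0 < h → ∀ y, ‖G h y * (chi (n+1) y * sK i0 E y)‖ ≤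
      (Metric.ball (0 : Fin (n+1) → ℝ) 1).indicator (fun y => C0 * ‖y‖ ^ (-(n:ℝ))) y := by
    intro h hh y
    by_cases hy : ‖y‖ < 1
    · rw [Set.indicator_of_mem (by simpa using hy)]
      by_cases hy0 : y = 0
      · subst hy0
        have : sK i0 E (0 : Fin (n+1) → ℝ) = 0 := by simp [sK]
        rw [this, mul_zero, mul_zero, norm_zero]
        positivity
      have hyp : 0 < ‖y‖ := norm_pos_iff.2 hy0
      have b1 := hGb h hh ⟨0, by omega⟩ y
      simp only [norm_iteratedFDeriv_zero, pow_zero, mul_one] at b1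
      have b2 := sK_bound i0 E hE0 y hy0
      have b3 : |chi (n+1) y| ≤ 1 := by
        rw [abs_of_nonneg (chi (n+1)).nonneg]; exact (chi (n+1)).le_one
      rw [norm_mul (G h y), norm_mul (chi (n+1) y), Real.norm_eq_abs (chi (n+1) y), Real.norm_eq_abs (sK i0 E y)]
      calc _ ≤ (C0 * ‖y‖ ^ (2*p+2)) * (1 * (‖y‖ ^ 2 * ‖y‖ ^ (-E))) := by gcongr
        _ = C0 * ‖y‖ ^ (((2*p+4 : ℕ) : ℝ) + -E) := by
            rw [Real.rpow_add hyp, Real.rpow_natCast]; ring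
        _ ≤ C0 * ‖y‖ ^ (-(n:ℝ)) := by
            refine mul_le_mul_of_nonneg_left ?_ hC00
            apply Real.rpow_le_rpow_of_exponent_ge hyp hy.le
            rw [hE]; push_cast; linarith [(Nat.cast_nonneg p : (0:ℝ) ≤ p)]
    · rw [(chi (n+1)).zero_of_le_dist (by simp only [chi, dist_zero_right]; linarith), zero_mul, mul_zero, norm_zero]
      apply Set.indicator_nonneg
      intro y _
      positivity
  have hind : Integrable ((Metric.ball (0 : Fin (n+1) → ℝ) 1).indicator (fun y => C0 * ‖y‖ ^ (-(n:ℝ)))) volume :=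
    (integrable_indicator_iff measurableSet_ball).2 (Integrable.const_mul hIi C0)
  have hsm : Measurable (sK i0 E) := by
    unfold sK euclNorm
    fun_prop
  refine ⟨C0 * I + K * A + 1, by
    have : 0 ≤ I := integral_nonneg fun y => by positivity
    positivity, fun h hh => ?_⟩
  have i1 : Integrable (fun y => G h y * (chi (n+1) y * sK i0 E y)) := by
    refine hind.mono' ?_ (Filter.Eventually.of_forall (hnear h hh))
    refine ((hGC h).continuous.measurable.mul ((chi (n+1)).continuous.measurable.mul hsm)).aestronglyMeasurable
  have hFC : ContDiff ℝ M (fun y => G h y * SK i0 E y) := (hGC h).mul (SK_contDiff M i0 E)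
  have hFcs : HasCompactSupport (fun y => G h y * SK i0 E y) := (hGcs h hh).mul_right
  have i2 : Integrable (fun y => G h y * SK i0 E y) := hFC.continuous.integrable_of_hasCompactSupport hFcs
  have hsplit : (∫ y, G h y * sK i0 E y) = (∫ y, G h y * (chi (n+1) y * sK i0 E y)) + ∫ y, G h y * SK i0 E y := by
    rw [← integral_add i1 i2]
    congr 1 with y
    unfold SK; ring
  have hsum : ∑' β : {β : Fin (n+1) → ℤ // β ≠ 0}, G h (fun j => (β.1 j : ℝ)) * sK i0 E (fun j => (β.1 j : ℝ)) =
      ∑' β : Fin (n+1) → ℤ, G h (fun j => (β j : ℝ)) * SK i0 E (fun j => (β j : ℝ)) := by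
    have e1 : ∀ β : {β : Fin (n+1) → ℤ // β ≠ 0}, G h (fun j => (β.1 j : ℝ)) * sK i0 E (fun j => (β.1 j : ℝ)) =
        G h (fun j => (β.1 j : ℝ)) * SK i0 E (fun j => (β.1 j : ℝ)) := by
      rintro ⟨β, hβ⟩
      simp only
      rw [SK_far]
      obtain ⟨j, hj⟩ := Function.ne_iff.1 hβ
      have h1 := norm_le_pi_norm (fun j => (β j : ℝ)) j
      have h2 : (1:ℝ) ≤ |(β j : ℝ)| := by exact_mod_cast Int.one_le_abs hj
      rw [Real.norm_eq_abs] at h1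
      linarith
    simp only [e1]
    refine tsum_subtype_eq_of_support_subset (s := {β : Fin (n+1) → ℤ | β ≠ 0})
      (f := fun β => G h (fun j => (β j : ℝ)) * SK i0 E (fun j => (β j : ℝ))) ?_
    intro β hβ h0
    apply hβ
    simp only
    rw [SK_near, mul_zero]
    have : (fun j => (β j : ℝ)) = 0 := by ext j; simp [h0]
    rw [this]; simp
  change |(∫ y, G h y * sK i0 E y) - ∑' β : {β : Fin (n+1) → ℤ // β ≠ 0}, G h (fun j => (β.1 j : ℝ)) *
          sK i0 E (fun j => (β.1 j : ℝ))| ≤ _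
  rw [hsplit, hsum, add_sub_assoc]
  have t1 : |∫ y, G h y * (chi (n+1) y * sK i0 E y)| ≤ C0 * I := by
    rw [← Real.norm_eq_abs]
    refine (norm_integral_le_of_norm_le hind (Filter.Eventually.of_forall (hnear h hh))).trans (le_of_eq ?_)
    rw [integral_indicator measurableSet_ball, integral_const_mul]
  have t2 := hK _ A hFC hFcs hA0 (hFd h hh)
  refine (abs_add_le _ _).trans ?_
  linarith

/-- order of convergence of the punctured-hole trapezoidal rule for `g·s`
with the on-diagonal singular kernel, when all derivatives of `g` up to order `2p+1`
vanish at the origin. -/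
theorem on_diagonal_punctured_trapezoidal_order
    (n : ℕ) (hn : 0 < n) (p : ℕ) (α : ℝ) (hα0 : 0 < α) (hα2 : α < 2)
    (Nsm : ℕ) (hNsm : max (2 * p + 4) (n + 1) ≤ Nsm)
    (g : (Fin n → ℝ) → ℝ) (hg : ContDiff ℝ (Nsm : ℕ∞) g) (hgc : HasCompactSupport g)
    (hgd : ∀ k : Fin n → ℕ, ∑ j, k j ≤ 2 * p + 1 → md k g 0 = 0) :
    ∃ C > (0:ℝ), ∀ h : ℝ, 0 < h → h ≤ 1 →
      |(∫ x : Fin n → ℝ, g x * (x ⟨0, hn⟩ ^ 2 / euclNorm x ^ ((n : ℝ) + α))) -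
          trap h (fun x => g x * (x ⟨0, hn⟩ ^ 2 / euclNorm x ^ ((n : ℝ) + α)))| ≤
        C * h ^ (2 * (p : ℝ) + 4 - α) := by
  obtain ⟨n, rfl⟩ : ∃ m, n = m + 1 := ⟨n - 1, by omega⟩
  set i0 : Fin (n+1) := ⟨0, hn⟩ with hi0
  set E : ℝ := ((n + 1 : ℕ) : ℝ) + α with hE
  have hg' : ContDiff ℝ (2*p+4 : ℕ) g := hg.of_le (by
    have h1 : 2*p+4 ≤ Nsm := (le_max_left _ _).trans hNsm
    exact WithTop.coe_le_coe.2 (Nat.cast_le.2 h1))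
  obtain ⟨C, hC0, hC⟩ := main_est n p α hα0 hα2 i0 E (by rw [hE]; push_cast; ring) g hg' hgc hgd
  refine ⟨C, hC0, fun h hh _ => ?_⟩
  have key := hC h hh
  have hf : ∀ y : Fin (n+1) → ℝ, g (h • y) * sK i0 E (h • y) =
      (h ^ (2*p+2) * h ^ (2 - E)) * ((h ^ (2*p+2))⁻¹ * g (h • y) * sK i0 E y) := by
    intro y
    rw [sK_smul i0 E h hh]
    field_simp
  have hInt : (∫ x, g x * sK i0 E x) = h ^ (n+1) * ((h ^ (2*p+2) * h ^ (2 - E)) *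
      ∫ y, (h ^ (2*p+2))⁻¹ * g (h • y) * sK i0 E y) := by
    rw [← integral_const_mul]
    simp only [← hf]
    rw [Measure.integral_comp_smul_of_nonneg volume (fun x => g x * sK i0 E x) h (hR := hh.le)]
    simp only [Module.finrank_fintype_fun_eq_card, Fintype.card_fin, smul_eq_mul]
    rw [mul_inv_cancel_left₀ (by positivity)]
  have hT : trap h (fun x => g x * sK i0 E x) = h ^ (n+1) * ((h ^ (2*p+2) * h ^ (2 - E)) *
      ∑' β : {β : Fin (n+1) → ℤ // β ≠ 0}, (h ^ (2*p+2))⁻¹ * g (h • fun j => (β.1 j : ℝ)) *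
          sK i0 E (fun j => (β.1 j : ℝ))) := by
    unfold trap
    have : ∀ β : Fin (n+1) → ℤ, (fun j => (β j : ℝ) * h) = h • fun j => (β j : ℝ) := by
      intro β; ext j; simp [mul_comm]
    simp only [this, hf]
    rw [tsum_mul_left]
  have hpow : h ^ (2 * (p : ℝ) + 4 - α) = h ^ (n+1) * (h ^ (2*p+2) * h ^ (2 - E)) := by
    rw [← Real.rpow_natCast h (n+1), ← Real.rpow_natCast h (2*p+2), ← Real.rpow_add hh, ← Real.rpow_add hh]
    congr 1
    rw [hE]; push_cast; ring
  change |(∫ x, g x * sK i0 E x) - trap h (fun x => g x * sK i0 E x)| ≤ _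
  rw [hInt, hT, ← mul_sub, ← mul_sub, ← mul_assoc, abs_mul, ← hpow, abs_of_pos (by positivity), mul_comm]
  gcongr
end

section
/- Let n ∈ ℕ with n ≥ 2, p ∈ ℕ, and 0 < α < 2. Assume g ∈ C_c^N(ℝ^n) with N ≥ max(2p+2, n+1) and ∂^k g(0) = 0 for all k ∈ ℕ₀^n with |k|₁ ≤ 2p−1 (including k = 0). Then there exists a constant C > 0 such that for all 0 < h ≤ 1: | ∫_{ℝ^n} g(x) s_{12}(x) dx − T_h^0[g·s_{12}] | ≤ C h^{2p+2−α}. -/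
open MeasureTheory Real

lemma aux_taylor1 (M : ℕ) : ∀ (φ : ℕ → ℝ → ℝ) (K : ℝ), 0 ≤ K →
    (∀ j < M, ∀ t ∈ Set.Icc (0:ℝ) 1, HasDerivAt (φ j) (φ (j+1) t) t) →
    (∀ t ∈ Set.Icc (0:ℝ) 1, |φ M t| ≤ K) →
    ∀ t ∈ Set.Icc (0:ℝ) 1, |φ 0 t - ∑ j ∈ Finset.range M, φ j 0 * t ^ j / (j.factorial : ℝ)| ≤ K := by
  induction M with
  | zero => intro φ K hK _ h t ht; simpa using h t ht
  | succ M ih =>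
    intro φ K hK hd hb t ht
    have h1 := ih (fun j => φ (j+1)) K hK (fun j hj => hd (j+1) (by omega)) hb
    set ψ : ℝ → ℝ := fun t => φ 0 t - ∑ j ∈ Finset.range (M+1), φ j 0 * t ^ j / (j.factorial : ℝ)
      with hψ
    have hder : ∀ s ∈ Set.Icc (0:ℝ) 1, HasDerivWithinAt ψ
        (φ 1 s - ∑ j ∈ Finset.range M, φ (j+1) 0 * s ^ j / (j.factorial : ℝ)) (Set.Icc 0 1) s := by
      intro s hs
      refine HasDerivAt.hasDerivWithinAt ?_
      refine (hd 0 (by omega) s hs).sub ?_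
      have h2 : HasDerivAt (fun t : ℝ => ∑ j ∈ Finset.range (M+1), φ j 0 * t ^ j / (j.factorial : ℝ))
          (∑ j ∈ Finset.range (M+1), φ j 0 * ((j:ℝ) * s ^ (j-1)) / (j.factorial : ℝ)) s := by
        refine HasDerivAt.fun_sum fun j _ => ?_
        exact ((hasDerivAt_pow j s).const_mul _).div_const _
      refine h2.congr_deriv ?_
      rw [Finset.sum_range_succ']
      simp only [Nat.cast_zero, zero_mul, mul_zero, zero_div, add_zero]
      refine Finset.sum_congr rfl fun j _ => ?_
      rw [Nat.factorial_succ]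
      have : (j.factorial : ℝ) ≠ 0 := by positivity
      have : ((j:ℝ)+1) ≠ 0 := by positivity
      push_cast
      field_simp
    have := (convex_Icc (0:ℝ) 1).norm_image_sub_le_of_norm_hasDerivWithin_le (C := K) hder
      (fun s hs => h1 s hs) (Set.left_mem_Icc.2 zero_le_one) ht
    have h0 : ψ 0 = 0 := by
      simp only [hψ]
      rw [Finset.sum_range_succ']
      simp
    rw [h0, sub_zero, sub_zero, Real.norm_eq_abs, Real.norm_eq_abs, abs_of_nonneg ht.1] at this
    exact this.trans (mul_le_of_le_one_right hK ht.2)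

lemma aux_taylor {E : Type*} [NormedAddCommGroup E] [NormedSpace ℝ E] (M : ℕ) (F : E → ℝ)
    (a v : E) (K : ℝ) (hK : 0 ≤ K)
    (hF : ∀ t ∈ Set.Icc (0:ℝ) 1, ContDiffAt ℝ M F (a + t • v))
    (hb : ∀ t ∈ Set.Icc (0:ℝ) 1, ‖iteratedFDeriv ℝ M F (a + t • v)‖ ≤ K) :
    |F (a + v) - ∑ j ∈ Finset.range M, iteratedFDeriv ℝ j F a (fun _ => v) / (j.factorial : ℝ)|
      ≤ K * ‖v‖ ^ M := by
  have := aux_taylor1 M (fun j t => iteratedFDeriv ℝ j F (a + t • v) (fun _ => v)) (K * ‖v‖ ^ M)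
    (by positivity) ?_ ?_ 1 (by simp)
  · simpa using this
  · intro j hj t ht
    have h1 : DifferentiableAt ℝ (iteratedFDeriv ℝ j F) (a + t • v) :=
      (hF t ht).differentiableAt_iteratedFDeriv (by exact_mod_cast hj)
    have h2 : HasDerivAt (fun t : ℝ => a + t • v) v t := by
      simpa using ((hasDerivAt_id t).smul_const v).const_add a
    have h3 := h1.hasFDerivAt.comp_hasDerivAt t h2
    have h4 := ((ContinuousMultilinearMap.apply ℝ (fun _ : Fin j => E) ℝ (fun _ => v)).hasFDerivAt).comp_hasDerivAt t h3
    exact h4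
  · intro t ht
    have := (iteratedFDeriv ℝ M F (a + t • v)).le_opNorm (fun _ => v)
    simp only [Finset.prod_const, Finset.card_univ, Fintype.card_fin, Real.norm_eq_abs] at this
    exact this.trans (by gcongr; exact hb t ht)

lemma aux_weights (M : ℕ) : ∃ w : Fin M → ℝ, ∀ m < M, ∑ j, w j * (j : ℝ) ^ m = 1 / ((m:ℝ) + 1) := by
  let V := Matrix.vandermonde (fun j : Fin M => (j : ℝ))
  have hdet : V.det ≠ 0 := by
    rw [Matrix.det_vandermonde_ne_zero_iff]
    intro a b h
    exact Fin.ext (Nat.cast_injective (R := ℝ) h)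
  let b : Fin M → ℝ := fun m => 1 / ((m:ℝ) + 1)
  refine ⟨Matrix.vecMul b V⁻¹, fun m hm => ?_⟩
  have : Matrix.vecMul (Matrix.vecMul b V⁻¹) V = b := by
    rw [Matrix.vecMul_vecMul, Matrix.nonsing_inv_mul _ (by simpa using hdet), Matrix.vecMul_one]
  have := congrFun this ⟨m, hm⟩
  simpa [Matrix.vecMul, dotProduct, V, Matrix.vandermonde, b] using this

lemma aux_quad_mono (n M : ℕ) (w : Fin M → ℝ)
    (hw : ∀ m < M, ∑ j, w j * (j : ℝ) ^ m = 1 / ((m:ℝ) + 1)) (e : Fin n → ℕ) (he : ∀ i, e i < M) :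
    ∫ v in Set.pi Set.univ (fun _ : Fin n => Set.Ico (0:ℝ) 1), ∏ i, v i ^ e i =
      ∑ J : Fin n → Fin M, (∏ i, w (J i)) * ∏ i, ((J i : ℕ) : ℝ) ^ e i := by
  rw [volume_pi, Measure.restrict_pi_pi]
  rw [integral_fintype_prod_eq_prod (fun i (t:ℝ) => t ^ e i)]
  simp_rw [← Finset.prod_mul_distrib]
  rw [← Fintype.prod_sum (fun i (j : Fin M) => w j * ((j:ℕ):ℝ) ^ e i)]
  refine Finset.prod_congr rfl fun i _ => ?_
  rw [hw _ (he i), integral_Ico_eq_integral_Ioc, ← intervalIntegral.integral_of_le zero_le_one]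
  simp [integral_pow]

lemma aux_multi_expand (n j : ℕ) (A : ContinuousMultilinearMap ℝ (fun _ : Fin j => (Fin n → ℝ)) ℝ)
    (v : Fin n → ℝ) :
    A (fun _ => v) = ∑ r : Fin j → Fin n,
      A (fun l => Pi.single (r l) 1) * ∏ i, v i ^ (Finset.univ.filter (fun l => r l = i)).card := by
  have hv : v = ∑ i, v i • (Pi.single i (1:ℝ) : Fin n → ℝ) := by
    ext k; simp [Finset.sum_apply, Pi.single_apply]
  conv_lhs => rw [hv]
  have := A.toMultilinearMap.map_sum (g := fun (_ : Fin j) (i : Fin n) => v i • (Pi.single i (1:ℝ) : Fin n → ℝ))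
  refine this.trans (Finset.sum_congr rfl fun r _ => ?_)
  rw [MultilinearMap.map_smul_univ, smul_eq_mul, mul_comm]
  congr 1
  rw [← Finset.prod_fiberwise' Finset.univ r (fun i => v i)]
  simp

lemma aux_quad_multi (n M j : ℕ) (hj : j < M) (w : Fin M → ℝ)
    (hw : ∀ m < M, ∑ j, w j * (j : ℝ) ^ m = 1 / ((m:ℝ) + 1))
    (A : ContinuousMultilinearMap ℝ (fun _ : Fin j => (Fin n → ℝ)) ℝ) :
    ∫ v in Set.pi Set.univ (fun _ : Fin n => Set.Ico (0:ℝ) 1), A (fun _ => v) =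
      ∑ J : Fin n → Fin M, (∏ i, w (J i)) * A (fun _ => fun i => ((J i : ℕ) : ℝ)) := by
  simp_rw [aux_multi_expand n j A, Finset.mul_sum]
  rw [integral_finsetSum, Finset.sum_comm]
  · refine Finset.sum_congr rfl fun r _ => ?_
    rw [integral_const_mul, aux_quad_mono n M w hw, Finset.mul_sum]
    · refine Finset.sum_congr rfl fun J _ => by ring
    · intro i
      exact ((Finset.card_le_univ _).trans (by simp)).trans_lt hj
  · intro r _
    have hc : Continuous (fun v : Fin n → ℝ => A (fun l => Pi.single (r l) 1) * ∏ i, v i ^ (Finset.univ.filter (fun l => r l = i)).card) := by fun_prop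
    refine (hc.integrableOn_Icc (a := 0) (b := 1)).mono_set ?_
    intro v hv
    simp only [Set.mem_pi, Set.mem_univ, forall_true_left, Set.mem_Ico] at hv
    exact ⟨fun i => (hv i).1, fun i => (hv i).2.le⟩

lemma aux_summable0 (n : ℕ) (r : ℝ) (hr : r < -(n:ℝ)) (L : Submodule ℤ (Fin n → ℝ))
    [DiscreteTopology L] [IsZLattice ℝ L]
    (hmem : ∀ k : Fin n → ℤ, (fun i => (k i : ℝ) : Fin n → ℝ) ∈ L) :
    Summable (fun k : Fin n → ℤ => ‖(fun i => (k i : ℝ) : Fin n → ℝ)‖ ^ r) := by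
  have hrk : Module.finrank ℤ L = n := by
    rw [ZLattice.rank ℝ L]; simp
  have h := ZLattice.summable_norm_rpow L r (by rw [hrk]; exact hr)
  have hinj : Function.Injective (fun k : Fin n → ℤ => (⟨_, hmem k⟩ : L)) := by
    intro k l hkl
    have := congrArg Subtype.val hkl
    funext i
    exact Int.cast_injective (α := ℝ) (congrFun this i)
  have h2 := h.comp_injective hinj
  refine h2.congr fun k => ?_
  simp only [Function.comp_apply, Submodule.coe_norm]

lemma aux_summable (n : ℕ) (r : ℝ) (hr : r < -(n:ℝ)) :
    Summable (fun k : Fin n → ℤ => ‖(fun i => (k i : ℝ) : Fin n → ℝ)‖ ^ r) := by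
  refine aux_summable0 n r hr (Submodule.span ℤ (Set.range (Pi.basisFun ℝ (Fin n)))) ?_
  intro k
  rw [Module.Basis.mem_span_iff_repr_mem]
  intro i
  exact ⟨k i, by simp⟩

def aux_Q (n : ℕ) : Set (Fin n → ℝ) := Set.pi Set.univ (fun _ : Fin n => Set.Ico (0:ℝ) 1)

lemma aux_Q_sub (n : ℕ) : aux_Q n ⊆ Set.Icc 0 1 := by
  intro v hv
  simp only [aux_Q, Set.mem_pi, Set.mem_univ, forall_true_left, Set.mem_Ico] at hv
  exact ⟨fun i => (hv i).1, fun i => (hv i).2.le⟩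

lemma aux_Q_meas (n : ℕ) : MeasurableSet (aux_Q n) :=
  MeasurableSet.univ_pi fun _ => measurableSet_Ico

lemma aux_Q_vol (n : ℕ) : volume (aux_Q n) = 1 := by
  simp [aux_Q, volume_pi_pi]

lemma aux_Icc_norm (n : ℕ) (v : Fin n → ℝ) (hv : v ∈ Set.Icc (0 : Fin n → ℝ) 1) : ‖v‖ ≤ 1 := by
  rw [pi_norm_le_iff_of_nonneg zero_le_one]
  intro i
  rw [Real.norm_eq_abs, abs_of_nonneg (hv.1 i)]
  exact hv.2 i

lemma aux_cell (n M : ℕ) (hM : 1 ≤ M) (w : Fin M → ℝ)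
    (hw : ∀ m < M, ∑ j, w j * (j : ℝ) ^ m = 1 / ((m:ℝ) + 1))
    (F : (Fin n → ℝ) → ℝ) (a : Fin n → ℝ) (K : ℝ) (hK : 0 ≤ K)
    (hF : ∀ v, ‖v‖ ≤ M → ContDiffAt ℝ M F (a + v))
    (hb : ∀ v, ‖v‖ ≤ M → ‖iteratedFDeriv ℝ M F (a + v)‖ ≤ K) :
    |(∫ v in aux_Q n, F (a + v)) -
      ∑ J : Fin n → Fin M, (∏ i, w (J i)) * F (a + fun i => ((J i : ℕ) : ℝ))| ≤
      K * (M:ℝ) ^ M * (1 + ∑ J : Fin n → Fin M, |∏ i, w (J i)|) := by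
  set P : (Fin n → ℝ) → ℝ := fun v =>
    ∑ j ∈ Finset.range M, iteratedFDeriv ℝ j F a (fun _ => v) / (j.factorial : ℝ) with hP
  have hM1 : (1:ℝ) ≤ M := by exact_mod_cast hM
  have hR : ∀ v, ‖v‖ ≤ M → |F (a + v) - P v| ≤ K * (M:ℝ) ^ M := by
    intro v hv
    have hs : ∀ t ∈ Set.Icc (0:ℝ) 1, ‖t • v‖ ≤ M := by
      intro t ht
      rw [norm_smul, Real.norm_eq_abs, abs_of_nonneg ht.1]
      exact (mul_le_of_le_one_left (norm_nonneg _) ht.2).trans hv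
    refine (aux_taylor M F a v K hK (fun t ht => hF _ (hs t ht)) (fun t ht => hb _ (hs t ht))).trans ?_
    gcongr
  have hPc : Continuous P := by
    rw [hP]
    refine continuous_finsetSum _ fun j _ => ?_
    refine Continuous.div_const ?_ _
    exact (iteratedFDeriv ℝ j F a).cont.comp (continuous_pi fun _ => continuous_id)
  have hcomp : IsCompact (Set.Icc (0 : Fin n → ℝ) 1) := isCompact_Icc
  have hPi : IntegrableOn P (aux_Q n) := (hPc.integrableOn_Icc).mono_set (aux_Q_sub n)
  have hFi : IntegrableOn (fun v => F (a + v)) (aux_Q n) := by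
    refine (ContinuousOn.integrableOn_compact hcomp ?_).mono_set (aux_Q_sub n)
    intro v hv
    have h1 := (hF v ((aux_Icc_norm n v hv).trans hM1)).continuousAt
    refine ContinuousAt.continuousWithinAt ?_
    exact ContinuousAt.comp (f := fun v => a + v) (g := F) h1 (by fun_prop)
  have hPq : ∫ v in aux_Q n, P v =
      ∑ J : Fin n → Fin M, (∏ i, w (J i)) * P (fun i => ((J i : ℕ) : ℝ)) := by
    simp only [hP]
    rw [integral_finsetSum]
    · simp_rw [Finset.mul_sum]
      rw [Finset.sum_comm]
      refine Finset.sum_congr rfl fun j hj => ?_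
      rw [integral_div]
      unfold aux_Q
      rw [aux_quad_multi n M j (Finset.mem_range.1 hj) w hw, Finset.sum_div]
      refine Finset.sum_congr rfl fun J _ => by ring
    · intro j _
      refine (Continuous.integrableOn_Icc ?_).mono_set (aux_Q_sub n)
      refine Continuous.div_const ?_ _
      exact (iteratedFDeriv ℝ j F a).cont.comp (continuous_pi fun _ => continuous_id)
  have e1 : (∫ v in aux_Q n, F (a + v)) -
      ∑ J : Fin n → Fin M, (∏ i, w (J i)) * F (a + fun i => ((J i : ℕ) : ℝ)) =
      (∫ v in aux_Q n, (F (a + v) - P v)) - ∑ J : Fin n → Fin M, (∏ i, w (J i)) *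
        (F (a + fun i => ((J i : ℕ) : ℝ)) - P (fun i => ((J i : ℕ) : ℝ))) := by
    rw [integral_sub hFi hPi, hPq]
    simp_rw [mul_sub]
    rw [Finset.sum_sub_distrib]
    ring
  rw [e1, mul_add, mul_one]
  refine (abs_sub _ _).trans (add_le_add ?_ ?_)
  · have := norm_setIntegral_le_of_norm_le_const (μ := volume) (s := aux_Q n)
      (f := fun v => F (a + v) - P v) (C := K * (M:ℝ)^M) (by rw [aux_Q_vol]; simp)
      (fun v hv => hR v ((aux_Icc_norm n v (aux_Q_sub n hv)).trans hM1))
    simpa [Measure.real, aux_Q_vol] using this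
  · refine (Finset.abs_sum_le_sum_abs _ _).trans ?_
    rw [Finset.mul_sum]
    refine Finset.sum_le_sum fun J _ => ?_
    rw [abs_mul, mul_comm]
    gcongr
    refine hR _ ?_
    rw [pi_norm_le_iff_of_nonneg (by positivity)]
    intro i
    simp only [Real.norm_eq_abs, Nat.abs_cast]
    exact_mod_cast (J i).2.le

lemma aux_cells_sum (n : ℕ) (F : (Fin n → ℝ) → ℝ) (hF : Integrable F) :
    HasSum (fun k : Fin n → ℤ => ∫ v in aux_Q n, F ((fun i => (k i : ℝ)) + v)) (∫ x, F x) := by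
  let c : (Fin n → ℤ) → Set (Fin n → ℝ) := fun k => {x | ∀ i, ⌊x i⌋ = k i}
  have hc : ∀ k, (fun v : Fin n → ℝ => (fun i => (k i : ℝ)) + v) ⁻¹' (c k) = aux_Q n := by
    intro k
    ext v
    simp only [c, aux_Q, Set.mem_preimage, Set.mem_ofPred_eq, Pi.add_apply, Set.mem_pi,
      Set.mem_univ, forall_true_left, Set.mem_Ico, Int.floor_eq_iff]
    refine forall_congr' fun i => ?_
    constructor <;> rintro ⟨h1, h2⟩ <;> constructor <;> linarith
  have hm : ∀ k, MeasurableSet (c k) := by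
    intro k
    simp only [c, Set.ofPred_forall]
    refine MeasurableSet.iInter fun i => ?_
    exact (Int.measurable_floor.comp (measurable_pi_apply i)) (measurableSet_singleton (k i))
  have hd : Pairwise (Function.onFun Disjoint c) := by
    intro k l hkl
    rw [Function.onFun, Set.disjoint_left]
    intro x hx hy
    exact hkl (funext fun i => (hx i).symm.trans (hy i))
  have hU : (⋃ k, c k) = Set.univ := by
    rw [Set.eq_univ_iff_forall]
    intro x
    exact Set.mem_iUnion.2 ⟨fun i => ⌊x i⌋, fun i => rfl⟩
  have h := hasSum_integral_iUnion (μ := volume) (f := F) hm hd (by rw [hU]; exact hF.integrableOn)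
  rw [hU, setIntegral_univ] at h
  have he : (fun k : Fin n → ℤ => ∫ v in aux_Q n, F ((fun i => (k i : ℝ)) + v)) =
      fun k => ∫ x in c k, F x := by
    funext k
    rw [← hc k]
    exact (measurePreserving_add_left volume (fun i => (k i : ℝ))).setIntegral_preimage_emb
      (measurableEmbedding_addLeft _) F (c k)
  rw [he]
  exact h

lemma aux_fin (n : ℕ) (R : ℝ) : {k : Fin n → ℤ | ‖(fun i => (k i : ℝ) : Fin n → ℝ)‖ ≤ R}.Finite := by
  have h : ((Set.Icc (fun _ => -⌈R⌉) (fun _ => ⌈R⌉)) : Set (Fin n → ℤ)).Finite := Set.finite_Icc _ _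
  refine h.subset ?_
  intro k hk
  have hk : ‖(fun i => (k i : ℝ) : Fin n → ℝ)‖ ≤ R := hk
  have h1 : ∀ i, |(k i:ℝ)| ≤ ⌈R⌉ := fun i =>
    ((norm_le_pi_norm (fun i => (k i : ℝ) : Fin n → ℝ) i).trans hk).trans (Int.le_ceil R)
  have h2 : ∀ i, |k i| ≤ ⌈R⌉ := fun i => by exact_mod_cast h1 i
  exact ⟨fun i => (abs_le.1 (h2 i)).1, fun i => (abs_le.1 (h2 i)).2⟩

lemma aux_main (n M : ℕ) (hn : 1 ≤ n) (hM : 1 ≤ M) (α σ : ℝ) (hα : 0 < α) (hσ : 0 < σ) :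
    ∃ C : ℝ, 0 ≤ C ∧ ∀ F : (Fin n → ℝ) → ℝ, HasCompactSupport F →
      (∀ y, y ≠ 0 → ContDiffAt ℝ M F y) →
      (∀ y, y ≠ 0 → ‖iteratedFDeriv ℝ M F y‖ ≤ ‖y‖ ^ (-((n:ℝ) + α))) →
      (∀ y, |F y| ≤ ‖y‖ ^ (σ - n)) →
      |(∫ x, F x) - ∑' k : Fin n → ℤ, F (fun i => (k i : ℝ))| ≤ C := by
  obtain ⟨w, hw⟩ := aux_weights M
  have hn0 : (0:ℝ) ≤ n := by positivity
  have hM1 : (1:ℝ) ≤ M := by exact_mod_cast hM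
  set ι : (Fin n → ℤ) → (Fin n → ℝ) := fun k i => (k i : ℝ) with hι
  set jj : (Fin n → Fin M) → (Fin n → ℝ) := fun J i => ((J i : ℕ) : ℝ) with hjj
  set W : (Fin n → Fin M) → ℝ := fun J => ∏ i, w (J i) with hW
  set near : (Fin n → ℤ) → ℝ := fun k =>
    (∫ v in aux_Q n, ‖ι k + v‖ ^ (σ - n)) + ∑ J, |W J| * ‖ι k + jj J‖ ^ (σ - n) with hnear
  set B : ℝ := (M:ℝ) ^ M * (1 + ∑ J, |W J|) * 2 ^ ((n:ℝ) + α) with hB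
  set b : (Fin n → ℤ) → ℝ := fun k => B * ‖ι k‖ ^ (-((n:ℝ) + α)) +
    ({k | ‖ι k‖ ≤ 2 * M} : Set (Fin n → ℤ)).indicator near k with hb
  have hB0 : 0 ≤ B := by positivity
  have hnear0 : ∀ k, 0 ≤ near k := by
    intro k
    have : 0 ≤ ∫ v in aux_Q n, ‖ι k + v‖ ^ (σ - n) :=
      integral_nonneg fun v => by positivity
    simp only [hnear]
    positivity
  have hsb : Summable b := by
    refine Summable.add ((aux_summable n _ (by linarith)).mul_left B) ?_
    refine summable_of_hasFiniteSupport ?_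
    exact (aux_fin n (2 * M)).subset Set.support_indicator_subset
  have hb0 : ∀ k, 0 ≤ b k := fun k =>
    add_nonneg (by positivity) (Set.indicator_nonneg (fun k _ => hnear0 k) k)
  have hdim : Module.finrank ℝ (Fin n → ℝ) = n := by simp
  have hmeasN : AEStronglyMeasurable (fun y : Fin n → ℝ => ‖y‖ ^ (σ - n)) volume := by
    refine Measurable.aestronglyMeasurable ?_
    fun_prop
  have hloc : LocallyIntegrable (fun y : Fin n → ℝ => ‖y‖ ^ (σ - n)) volume := by
    refine locallyIntegrable_of_norm_le_rpow (C := 1) (α := n - σ) (by rw [hdim]; exact hn)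
      (by rw [hdim]; linarith) ?_ hmeasN
    refine Filter.Eventually.of_forall fun x => ?_
    rw [neg_sub, one_mul, Real.norm_of_nonneg (by positivity)]
  refine ⟨∑' k, b k, tsum_nonneg hb0, ?_⟩
  intro F hFc hFd hFD hF0
  -- integrability
  have hcont : ContinuousOn F {0}ᶜ := fun y hy => (hFd y hy).continuousAt.continuousWithinAt
  have hnt : Nontrivial (Fin n → ℝ) := by
    have : Nonempty (Fin n) := ⟨⟨0, hn⟩⟩
    infer_instance
  have hmeas : AEStronglyMeasurable F volume := by
    have h1 := hcont.aestronglyMeasurable (μ := volume) (measurableSet_singleton (0 : Fin n → ℝ)).compl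
    rwa [restrict_compl_singleton] at h1
  have hint : Integrable F := by
    have h1 : IntegrableOn F (tsupport F) volume := by
      refine Integrable.mono' (hloc.integrableOn_isCompact hFc) hmeas.restrict ?_
      exact Filter.Eventually.of_forall hF0
    exact (integrableOn_iff_integrable_of_support_subset (subset_tsupport F)).1 h1
  have hS1 := aux_cells_sum n F hint
  -- lattice sum
  obtain ⟨R, hR⟩ := hFc.isBounded.exists_norm_le
  have hfin : (Function.support (fun k => F (ι k))).Finite := by
    refine (aux_fin n R).subset ?_
    intro k hk
    exact hR _ (subset_tsupport F hk)
  have hS : Summable (fun k => F (ι k)) := summable_of_hasFiniteSupport hfin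
  set S := ∑' k, F (ι k) with hSdef
  have hS2 : HasSum (fun k => ∑ J, W J * F (ι k + jj J)) S := by
    have h1 : ∀ J ∈ (Finset.univ : Finset (Fin n → Fin M)), HasSum (fun k => W J * F (ι k + jj J)) (W J * S) := by
      intro J _
      refine HasSum.mul_left _ ?_
      have h2 := (Equiv.addRight (fun i => ((J i : ℕ) : ℤ))).hasSum_iff.2 hS.hasSum
      have he : (fun k => F (ι k + jj J)) =
          (fun k => F (ι k)) ∘ (Equiv.addRight (fun i => ((J i : ℕ) : ℤ))) := by
        funext k
        simp only [Function.comp_apply, Equiv.coe_addRight, hι, hjj]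
        congr 1
        funext i
        simp
      rw [he]
      exact h2
    have h3 := hasSum_sum h1
    rw [← Finset.sum_mul] at h3
    have h4 : ∑ J, W J = 1 := by
      have := aux_quad_mono n M w hw (fun _ => 0) (fun _ => by omega)
      have h5 := aux_Q_vol n
      unfold aux_Q at h5
      simp [Measure.real, h5] at this
      exact this.symm
    rwa [h4, one_mul] at h3
  have hE := hS1.sub hS2
  rw [← hE.tsum_eq, ← Real.norm_eq_abs]
  refine tsum_of_norm_bounded hsb.hasSum ?_
  · intro k
    rw [Real.norm_eq_abs]
    by_cases hk : ‖ι k‖ ≤ 2 * M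
    · have h1 : near k ≤ b k := by
        simp only [hb]
        rw [Set.indicator_of_mem (by exact hk)]
        have : 0 ≤ B * ‖ι k‖ ^ (-((n:ℝ) + α)) := by positivity
        linarith
      refine le_trans ?_ h1
      refine (abs_sub _ _).trans (add_le_add ?_ ?_)
      · refine (norm_integral_le_integral_norm (μ := volume.restrict (aux_Q n)) (fun v => F (ι k + v))).trans ?_
        have hint2 : IntegrableOn (fun v => ‖ι k + v‖ ^ (σ - n)) (aux_Q n) := by
          have h3 : IntegrableOn (fun y : Fin n → ℝ => ‖y‖ ^ (σ - n)) (Metric.closedBall 0 (‖ι k‖ + 1)) :=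
            hloc.integrableOn_isCompact (isCompact_closedBall _ _)
          have h4 := ((measurePreserving_add_left volume (ι k)).integrableOn_comp_preimage
            (measurableEmbedding_addLeft (ι k))).2 h3
          refine h4.mono_set ?_
          intro v hv
          simp only [Set.mem_preimage, mem_closedBall_zero_iff]
          exact (norm_add_le _ _).trans (by gcongr; exact aux_Icc_norm n v (aux_Q_sub n hv))
        refine integral_mono_of_nonneg (Filter.Eventually.of_forall fun v => norm_nonneg _) hint2 ?_
        exact Filter.Eventually.of_forall fun v => hF0 _
      · refine (Finset.abs_sum_le_sum_abs _ _).trans (Finset.sum_le_sum fun J _ => ?_)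
        rw [abs_mul]
        gcongr
        exact hF0 _
    · have h1 : B * ‖ι k‖ ^ (-((n:ℝ) + α)) ≤ b k := by
        have := Set.indicator_nonneg (s := ({k | ‖ι k‖ ≤ 2 * M} : Set (Fin n → ℤ))) (fun k _ => hnear0 k) k
        simp only [hb]
        linarith
      refine le_trans ?_ h1
      push Not at hk
      have hpos : 0 < ‖ι k‖ := by linarith
      have hh : ∀ v : Fin n → ℝ, ‖v‖ ≤ M → ‖ι k‖ / 2 ≤ ‖ι k + v‖ := by
        intro v hv
        have := norm_sub_le (ι k + v) v
        rw [add_sub_cancel_right] at this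
        linarith
      have hne : ∀ v : Fin n → ℝ, ‖v‖ ≤ M → ι k + v ≠ 0 := by
        intro v hv h0
        have := hh v hv
        rw [h0, norm_zero] at this
        linarith
      refine (aux_cell n M hM w hw F (ι k) ((‖ι k‖ / 2) ^ (-((n:ℝ) + α))) (by positivity)
        (fun v hv => hFd _ (hne v hv)) (fun v hv => (hFD _ (hne v hv)).trans ?_)).trans ?_
      · exact Real.rpow_le_rpow_of_nonpos (by positivity) (hh v hv) (by linarith)
      · rw [div_eq_mul_inv, Real.mul_rpow (by positivity) (by positivity), Real.inv_rpow (by norm_num),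
          Real.rpow_neg (x := 2) (by norm_num), inv_inv, hB]
        apply le_of_eq
        ring

lemma aux_scale {E : Type*} [NormedAddCommGroup E] [NormedSpace ℝ E] (f : E → ℝ) (t : ℝ) (ht : t ≠ 0)
    (j : ℕ) (x : E) :
    ‖iteratedFDeriv ℝ j (fun y => f (t • y)) x‖ = |t| ^ j * ‖iteratedFDeriv ℝ j f (t • x)‖ := by
  let e : E ≃L[ℝ] E := ContinuousLinearEquiv.smulLeft (Units.mk0 t ht)
  have he : ∀ y, e y = t • y := fun y => rfl
  have h := e.iteratedFDerivWithin_comp_right f uniqueDiffOn_univ (x := x) (Set.mem_univ _) j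
  rw [Set.preimage_univ, iteratedFDerivWithin_univ, iteratedFDerivWithin_univ] at h
  have h2 : (fun y => f (t • y)) = f ∘ e := rfl
  rw [h2, h]
  have h3 : ((iteratedFDeriv ℝ j f (e x)).compContinuousLinearMap fun _ => (e : E →L[ℝ] E)) =
      t ^ j • iteratedFDeriv ℝ j f (t • x) := by
    ext m
    have := (iteratedFDeriv ℝ j f (t • x)).map_smul_univ (fun _ => t) m
    simpa [he] using this
  rw [h3, norm_smul, norm_pow, Real.norm_eq_abs]

noncomputable def aux_s {n : ℕ} (hn : 2 ≤ n) (α : ℝ) (x : Fin n → ℝ) : ℝ :=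
  x ⟨0, by omega⟩ * x ⟨1, by omega⟩ / euclNorm x ^ ((n : ℝ) + α)

lemma aux_sumsq_pos {n : ℕ} (x : Fin n → ℝ) (hx : x ≠ 0) : 0 < ∑ j, x j ^ 2 := by
  obtain ⟨i, hi⟩ := Function.ne_iff.1 hx
  refine Finset.sum_pos' (fun _ _ => sq_nonneg _) ⟨i, Finset.mem_univ _, ?_⟩
  have : x i ≠ 0 := hi
  positivity

lemma aux_s_cd {n : ℕ} (hn : 2 ≤ n) (α : ℝ) (M : ℕ) (x : Fin n → ℝ) (hx : x ≠ 0) :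
    ContDiffAt ℝ M (aux_s hn α) x := by
  have hp := aux_sumsq_pos x hx
  have h1 : ContDiffAt ℝ M (fun x : Fin n → ℝ => euclNorm x) x := by
    unfold euclNorm
    refine ContDiffAt.sqrt ?_ hp.ne'
    fun_prop
  have h2 : 0 < euclNorm x := Real.sqrt_pos.2 hp
  unfold aux_s
  refine ContDiffAt.div (by fun_prop) (h1.rpow_const_of_ne h2.ne') ?_
  positivity

lemma aux_s_hom {n : ℕ} (hn : 2 ≤ n) (α : ℝ) (t : ℝ) (ht : 0 < t) (x : Fin n → ℝ) :
    aux_s hn α (t • x) = t ^ (2 - (n:ℝ) - α) * aux_s hn α x := by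
  have h1 : euclNorm (t • x) = t * euclNorm x := by
    unfold euclNorm
    simp only [Pi.smul_apply, smul_eq_mul, mul_pow]
    rw [← Finset.mul_sum, Real.sqrt_mul (sq_nonneg t), Real.sqrt_sq ht.le]
  unfold aux_s
  rw [h1, Real.mul_rpow ht.le (show 0 ≤ euclNorm x from Real.sqrt_nonneg _)]
  have h2 : t ^ (2 - (n:ℝ) - α) = t ^ 2 / t ^ ((n:ℝ) + α) := by
    rw [← Real.rpow_natCast t 2, ← Real.rpow_sub ht]
    congr 1
    push_cast
    ring
  rw [h2]
  simp only [Pi.smul_apply, smul_eq_mul]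
  rw [div_mul_div_comm]
  ring

lemma aux_s_bound {n : ℕ} (hn : 2 ≤ n) (α : ℝ) (M : ℕ) :
    ∃ C : ℝ, 0 ≤ C ∧ ∀ j ≤ M, ∀ y : Fin n → ℝ, y ≠ 0 →
      ‖iteratedFDeriv ℝ j (aux_s hn α) y‖ ≤ C * ‖y‖ ^ (2 - (n:ℝ) - α - j) := by
  have h1 : ∀ j : ℕ, ∃ C : ℝ, ∀ u ∈ Metric.sphere (0 : Fin n → ℝ) 1,
      ‖iteratedFDeriv ℝ j (aux_s hn α) u‖ ≤ C := by
    intro j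
    refine (isCompact_sphere (0 : Fin n → ℝ) 1).exists_bound_of_continuousOn ?_
    intro u hu
    have hu0 : u ≠ 0 := by
      rintro rfl
      simp at hu
    exact ((aux_s_cd hn α j u hu0).continuousAt_iteratedFDeriv le_rfl).continuousWithinAt
  choose c hc using h1
  refine ⟨∑ j ∈ Finset.range (M+1), |c j|, by positivity, ?_⟩
  intro j hj y hy
  have ht : 0 < ‖y‖ := norm_pos_iff.2 hy
  set t := ‖y‖ with htdef
  have hu : ‖t⁻¹ • y‖ = 1 := by
    rw [norm_smul, norm_inv, Real.norm_eq_abs, abs_of_pos ht, ← htdef, inv_mul_cancel₀ ht.ne']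
  have hu0 : t⁻¹ • y ≠ 0 := by
    intro h; rw [h, norm_zero] at hu; exact zero_ne_one hu
  have hfun : aux_s hn α = fun x => t ^ (2 - (n:ℝ) - α) • aux_s hn α (t⁻¹ • x) := by
    funext x
    rw [smul_eq_mul, ← aux_s_hom hn α t ht, smul_inv_smul₀ ht.ne']
  have hcd : ContDiffAt ℝ j (fun x => aux_s hn α (t⁻¹ • x)) y :=
    ContDiffAt.comp y (f := fun x : Fin n → ℝ => t⁻¹ • x) (g := aux_s hn α) (aux_s_cd hn α j _ hu0) (by fun_prop)
  rw [hfun, iteratedFDeriv_const_smul_apply' hcd, norm_smul, aux_scale _ _ (inv_ne_zero ht.ne'),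
    Real.norm_of_nonneg (by positivity), abs_of_pos (inv_pos.2 ht)]
  have h2 : ‖iteratedFDeriv ℝ j (aux_s hn α) (t⁻¹ • y)‖ ≤ ∑ j ∈ Finset.range (M+1), |c j| :=
    ((hc j _ (by simpa using hu)).trans (le_abs_self _)).trans
      (Finset.single_le_sum (f := fun j => |c j|) (fun _ _ => abs_nonneg _) (Finset.mem_range.2 (by omega)))
  have h3 : t ^ (2 - (n:ℝ) - α - j) = t ^ (2 - (n:ℝ) - α) * t⁻¹ ^ j := by
    rw [Real.rpow_sub ht, Real.rpow_natCast, inv_pow, div_eq_mul_inv]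
  rw [h3, ← mul_assoc, mul_comm]
  gcongr

noncomputable def aux_pdl {n : ℕ} (l : List (Fin n)) (f : (Fin n → ℝ) → ℝ) : (Fin n → ℝ) → ℝ :=
  l.foldr pd f

lemma aux_pdl_smooth {n : ℕ} (f : (Fin n → ℝ) → ℝ) (l : List (Fin n)) :
    ∀ m : ℕ, ContDiff ℝ ((l.length + m : ℕ)) f → ContDiff ℝ m (aux_pdl l f) := by
  induction l with
  | nil => intro m h; simpa [aux_pdl] using h
  | cons a l ih =>
    intro m h
    have h1 := ih (m+1) (by convert h using 2; simp; ring)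
    change ContDiff ℝ m (pd a (aux_pdl l f))
    unfold pd
    exact (h1.fderiv_right (m := m) (by norm_cast)).clm_apply contDiff_const

lemma aux_pd_comm {n : ℕ} (u : (Fin n → ℝ) → ℝ) (hu : ContDiff ℝ 2 u) (a b : Fin n) :
    pd a (pd b u) = pd b (pd a u) := by
  funext x
  have hd : DifferentiableAt ℝ (fderiv ℝ u) x :=
    (hu.fderiv_right (m := 1) (by norm_num)).contDiffAt.differentiableAt (by norm_num)
  have h1 : ∀ a b : Fin n, pd a (pd b u) x =
      fderiv ℝ (fderiv ℝ u) x (Pi.single a 1) (Pi.single b 1) := by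
    intro a b
    unfold pd
    rw [fderiv_clm_apply hd (differentiableAt_const _)]
    simp
  rw [h1, h1]
  exact (hu.contDiffAt.isSymmSndFDerivAt (by simp)).eq _ _

lemma aux_pdl_perm {n : ℕ} (f : (Fin n → ℝ) → ℝ) {l l' : List (Fin n)} (hp : l.Perm l') :
    ContDiff ℝ (l.length : ℕ) f → aux_pdl l f = aux_pdl l' f := by
  induction hp with
  | nil => intro _; rfl
  | cons a _ ih =>
    intro h
    have := ih (h.of_le (by simp))
    change pd a (aux_pdl _ f) = pd a (aux_pdl _ f)
    rw [this]
  | swap a b l =>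
    intro h
    change pd b (pd a (aux_pdl l f)) = pd a (pd b (aux_pdl l f))
    exact aux_pd_comm _ (aux_pdl_smooth f l 2 h) _ _
  | trans h1 _ ih1 ih2 =>
    intro h
    rw [ih1 h, ih2 (by rw [← h1.length_eq]; exact h)]

lemma aux_md {n : ℕ} (γ : Fin n → ℕ) (f : (Fin n → ℝ) → ℝ) :
    md γ f = aux_pdl ((List.finRange n).flatMap (fun j => List.replicate (γ j) j)) f := by
  unfold md aux_pdl
  induction List.finRange n with
  | nil => rfl
  | cons a l ih =>
    rw [List.foldr_cons, List.flatMap_cons, List.foldr_append, ← ih]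
    generalize List.foldr (fun j g => (pd j)^[γ j] g) f l = u
    induction γ a with
    | zero => rfl
    | succ k ihk => rw [Function.iterate_succ_apply', ihk, List.replicate_succ, List.foldr_cons]

lemma aux_pdl_zero {n : ℕ} (m : ℕ) (f : (Fin n → ℝ) → ℝ) (hf : ContDiff ℝ (m:ℕ) f)
    (h : ∀ k : Fin n → ℕ, ∑ j, k j ≤ m → md k f 0 = 0) (l : List (Fin n)) (hl : l.length ≤ m) :
    aux_pdl l f 0 = 0 := by
  have hp : l.Perm ((List.finRange n).flatMap (fun j => List.replicate (l.count j) j)) := by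
    rw [List.perm_iff_count]
    intro a
    rw [List.count_flatMap, ← Fin.sum_univ_def]
    simp [List.count_replicate]
  rw [aux_pdl_perm f hp (hf.of_le (by exact_mod_cast hl)), ← aux_md]
  refine h _ ?_
  have := hp.length_eq
  rw [List.length_flatMap, ← Fin.sum_univ_def] at this
  simp only [List.length_replicate] at this
  omega

lemma aux_iter {n : ℕ} (f : (Fin n → ℝ) → ℝ) (k : ℕ) : ∀ (r : Fin k → Fin n),
    ContDiff ℝ (k:ℕ) f → ∀ x, iteratedFDeriv ℝ k f x (fun l => Pi.single (r l) 1) =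
      aux_pdl (List.ofFn r) f x := by
  induction k with
  | zero => intro r _ x; simp [aux_pdl]
  | succ k ih =>
    intro r hf x
    rw [List.ofFn_succ]
    change _ = pd (r 0) (aux_pdl _ f) x
    have h1 := ih (fun i => r i.succ) (hf.of_le (by norm_cast; omega))
    have h2 : aux_pdl (List.ofFn (fun i => r i.succ)) f = fun x =>
      iteratedFDeriv ℝ k f x (fun l => Pi.single (r l.succ) 1) := by
      funext x; exact (h1 x).symm
    rw [h2, iteratedFDeriv_succ_apply_left]
    unfold pd
    have hd : DifferentiableAt ℝ (iteratedFDeriv ℝ k f) x :=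
      hf.contDiffAt.differentiableAt_iteratedFDeriv (by norm_cast; omega)
    have h3 := ((ContinuousMultilinearMap.apply ℝ (fun _ : Fin k => Fin n → ℝ) ℝ
      (fun l => Pi.single (r l.succ) 1)).hasFDerivAt).comp x hd.hasFDerivAt
    have h4 := h3.fderiv
    have h5 : (fun x => iteratedFDeriv ℝ k f x (fun l => Pi.single (r l.succ) 1)) =
      (ContinuousMultilinearMap.apply ℝ (fun _ : Fin k => Fin n → ℝ) ℝ
      (fun l => Pi.single (r l.succ) 1)) ∘ iteratedFDeriv ℝ k f := rfl
    rw [h5, h4]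
    rfl

lemma aux_iter_zero {n : ℕ} (m : ℕ) (f : (Fin n → ℝ) → ℝ) (hf : ContDiff ℝ (m:ℕ) f)
    (h : ∀ k : Fin n → ℕ, ∑ j, k j ≤ m → md k f 0 = 0) (i : ℕ) (hi : i ≤ m) :
    iteratedFDeriv ℝ i f 0 = 0 := by
  ext v
  have hv : ∀ l, v l = ∑ a, v l a • (Pi.single a (1:ℝ) : Fin n → ℝ) := by
    intro l
    ext k; simp [Finset.sum_apply, Pi.single_apply]
  have h1 := (iteratedFDeriv ℝ i f 0).toMultilinearMap.map_sum
    (g := fun l a => v l a • (Pi.single a (1:ℝ) : Fin n → ℝ))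
  rw [funext hv]
  refine h1.trans (Finset.sum_eq_zero fun r _ => ?_)
  rw [MultilinearMap.map_smul_univ]
  have h2 := aux_iter f i r (hf.of_le (by exact_mod_cast hi)) 0
  rw [aux_pdl_zero m f hf h _ (by simpa using hi)] at h2
  erw [h2]
  simp

lemma aux_g_bound {n : ℕ} (q N : ℕ) (hq : 1 ≤ q) (hqN : q ≤ N) (g : (Fin n → ℝ) → ℝ)
    (hg : ContDiff ℝ (N:ℕ) g) (hgc : HasCompactSupport g)
    (hgd : ∀ k : Fin n → ℕ, ∑ j, k j ≤ q - 1 → md k g 0 = 0) :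
    ∃ C : ℝ, 0 ≤ C ∧ ∀ i ≤ N, ∀ x : Fin n → ℝ, x ≠ 0 →
      ‖iteratedFDeriv ℝ i g x‖ ≤ C * ‖x‖ ^ ((q:ℝ) - i) := by
  have hbd : ∀ i : ℕ, i ≤ N → ∃ C : ℝ, 0 ≤ C ∧ ∀ x, ‖iteratedFDeriv ℝ i g x‖ ≤ C := by
    intro i hi
    obtain ⟨C, hC⟩ := (hgc.iteratedFDeriv (𝕜 := ℝ) i).exists_bound_of_continuous
      (hg.continuous_iteratedFDeriv (by exact_mod_cast hi))
    exact ⟨C, (norm_nonneg _).trans (hC 0), hC⟩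
  have hlow : ∀ d : ℕ, d ≤ q → ∃ C : ℝ, 0 ≤ C ∧ ∀ x,
      ‖iteratedFDeriv ℝ (q - d) g x‖ ≤ C * ‖x‖ ^ d := by
    intro d
    induction d with
    | zero =>
      intro _
      obtain ⟨C, h0, hC⟩ := hbd q hqN
      exact ⟨C, h0, by simpa using hC⟩
    | succ d ih =>
      intro hd
      obtain ⟨C, h0, hC⟩ := ih (by omega)
      refine ⟨C, h0, fun x => ?_⟩
      have hz : iteratedFDeriv ℝ (q - (d+1)) g 0 = 0 :=
        aux_iter_zero (q-1) g (hg.of_le (by norm_cast; omega)) hgd _ (by omega)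
      have hdiff : Differentiable ℝ (iteratedFDeriv ℝ (q - (d+1)) g) :=
        hg.differentiable_iteratedFDeriv (by norm_cast; omega)
      have := (convex_closedBall (0 : Fin n → ℝ) ‖x‖).norm_image_sub_le_of_norm_fderiv_le (𝕜 := ℝ)
        (f := iteratedFDeriv ℝ (q - (d+1)) g) (C := C * ‖x‖ ^ d) (x := 0) (y := x)
        (fun y _ => hdiff y) (fun y hy => ?_) (by simp) (by simp)
      · rw [hz, sub_zero, sub_zero] at this
        rw [pow_succ, ← mul_assoc]
        exact this
      · rw [norm_fderiv_iteratedFDeriv, show q - (d+1) + 1 = q - d by omega]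
        refine (hC y).trans ?_
        have : ‖y‖ ≤ ‖x‖ := by simpa using hy
        gcongr
  obtain ⟨R, hR⟩ := hgc.isBounded.exists_norm_le
  have hall : ∀ i : ℕ, ∃ C : ℝ, 0 ≤ C ∧ (i ≤ N → ∀ x : Fin n → ℝ, x ≠ 0 →
      ‖iteratedFDeriv ℝ i g x‖ ≤ C * ‖x‖ ^ ((q:ℝ) - i)) := by
    intro i
    by_cases hi : i ≤ N
    swap
    · exact ⟨0, le_rfl, fun h => absurd h hi⟩
    by_cases hiq : i ≤ q
    · obtain ⟨C, h0, hC⟩ := hlow (q - i) (by omega)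
      refine ⟨C, h0, fun _ x _ => ?_⟩
      have := hC x
      rw [show q - (q - i) = i by omega] at this
      rwa [← Nat.cast_sub hiq, Real.rpow_natCast]
    · push Not at hiq
      obtain ⟨C, h0, hC⟩ := hbd i hi
      refine ⟨C * |R| ^ (i - q), by positivity, fun _ x hx => ?_⟩
      by_cases hxs : x ∈ tsupport g
      · have h1 : ‖x‖ ≤ |R| := (hR x hxs).trans (le_abs_self R)
        have hx0 : 0 < ‖x‖ := norm_pos_iff.2 hx
        have h2 : ‖x‖ ^ ((q:ℝ) - i) = (‖x‖ ^ (i - q))⁻¹ := by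
          rw [← Real.rpow_natCast, ← Real.rpow_neg hx0.le, Nat.cast_sub hiq.le, neg_sub]
        rw [h2, mul_assoc]
        refine (hC x).trans (le_mul_of_one_le_right h0 ?_)
        rw [← div_eq_mul_inv, one_le_div (by positivity)]
        gcongr
      · have h1 : iteratedFDeriv ℝ i g x = 0 := by
          by_contra hne
          exact hxs (support_iteratedFDeriv_subset (𝕜 := ℝ) i hne)
        rw [h1, norm_zero]
        positivity
  choose c hc0 hc using hall
  refine ⟨∑ i ∈ Finset.range (N+1), c i, Finset.sum_nonneg fun i _ => hc0 i, ?_⟩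
  intro i hi x hx
  refine (hc i hi x hx).trans ?_
  gcongr
  exact Finset.single_le_sum (f := c) (fun i _ => hc0 i) (Finset.mem_range.2 (by omega))

/-- order of convergence of the punctured-hole trapezoidal rule for `g·s₁₂`
with the off-diagonal singular kernel, when all derivatives of `g` up to order `2p-1`
vanish at the origin. -/
theorem off_diagonal_punctured_trapezoidal_order
    (n : ℕ) (hn : 2 ≤ n) (p : ℕ) (hp : 1 ≤ p) (α : ℝ) (hα0 : 0 < α) (hα2 : α < 2)
    (Nsm : ℕ) (hNsm : max (2 * p + 2) (n + 1) ≤ Nsm)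
    (g : (Fin n → ℝ) → ℝ) (hg : ContDiff ℝ (Nsm : ℕ∞) g) (hgc : HasCompactSupport g)
    (hgd : ∀ k : Fin n → ℕ, ∑ j, k j ≤ 2 * p - 1 → md k g 0 = 0) :
    ∃ C > (0:ℝ), ∀ h : ℝ, 0 < h → h ≤ 1 →
      |(∫ x : Fin n → ℝ,
            g x * (x ⟨0, by omega⟩ * x ⟨1, by omega⟩ / euclNorm x ^ ((n : ℝ) + α))) -
          trap h (fun x =>
            g x * (x ⟨0, by omega⟩ * x ⟨1, by omega⟩ / euclNorm x ^ ((n : ℝ) + α)))| ≤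
        C * h ^ (2 * (p : ℝ) + 2 - α) := by
  have hN1 : 2 * p + 2 ≤ Nsm := (le_max_left _ _).trans hNsm
  have hn2 : (2:ℝ) ≤ n := by exact_mod_cast hn
  set M : ℕ := 2 * p + 2 with hM
  have hgM : ContDiff ℝ (M:ℕ) g := hg.of_le (by exact_mod_cast hN1)
  obtain ⟨Cg, hCg0, hCg⟩ := aux_g_bound (2*p) M (by omega) (by omega) g hgM hgc hgd
  obtain ⟨Cs, hCs0, hCs⟩ := aux_s_bound hn α M
  obtain ⟨C, hC0, hC⟩ := aux_main n M (by omega) (by omega) α (2 * p + 2 - α) hα0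
    (by have : (0:ℝ) ≤ p := by positivity
        linarith)
  set K : ℝ := (∑ i ∈ Finset.range (M+1), (M.choose i : ℝ)) * (Cg * Cs) + 1 with hK
  have hsum1 : (1:ℝ) ≤ ∑ i ∈ Finset.range (M+1), (M.choose i : ℝ) := by
    refine le_trans ?_ (Finset.single_le_sum (f := fun i => (M.choose i : ℝ)) (fun _ _ => by positivity)
      (Finset.mem_range.2 (Nat.succ_pos M)))
    simp
  have hCC : 0 ≤ Cg * Cs := by positivity
  have hK0 : 0 < K := by positivity
  have hK1 : Cg * Cs ≤ K := by
    have := mul_le_mul_of_nonneg_right hsum1 hCC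
    linarith
  have hK2 : (∑ i ∈ Finset.range (M+1), (M.choose i : ℝ)) * (Cg * Cs) ≤ K := by linarith
  refine ⟨K * C + 1, by positivity, ?_⟩
  intro h hh hh1
  -- the rescaled function
  set G : (Fin n → ℝ) → ℝ := fun y => (h ^ (2*p))⁻¹ • g (h • y) with hG
  set s : (Fin n → ℝ) → ℝ := aux_s hn α with hs
  set F : (Fin n → ℝ) → ℝ := fun y => K⁻¹ • (G y * s y) with hF
  have hs0 : s 0 = 0 := by simp [hs, aux_s]
  have hF0 : F 0 = 0 := by simp [hF, hs0]
  have hgh : ContDiff ℝ (M:ℕ) (fun y => g (h • y)) := hgM.comp (contDiff_const_smul h)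
  have hGc : ContDiff ℝ (M:ℕ) G := hgh.const_smul _
  have hGb : ∀ i ≤ M, ∀ y, y ≠ 0 → ‖iteratedFDeriv ℝ i G y‖ ≤ Cg * ‖y‖ ^ (2 * (p:ℝ) - i) := by
    intro i hi y hy
    have hy0 : 0 < ‖y‖ := norm_pos_iff.2 hy
    have h1 : ContDiffAt ℝ i (fun y => g (h • y)) y := (hgh.of_le (by exact_mod_cast hi)).contDiffAt
    rw [hG, iteratedFDeriv_const_smul_apply' h1, norm_smul, aux_scale _ _ hh.ne', abs_of_pos hh,
      Real.norm_of_nonneg (by positivity)]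
    have h2 := hCg i hi (h • y) (smul_ne_zero hh.ne' hy)
    rw [norm_smul, Real.norm_of_nonneg hh.le, Real.mul_rpow hh.le hy0.le] at h2
    have h3 : h ^ (((2 * p : ℕ) : ℝ) - i) = h ^ (2*p) / h ^ i := by
      rw [Real.rpow_sub hh, Real.rpow_natCast, Real.rpow_natCast]
    rw [h3] at h2
    calc (h ^ (2*p))⁻¹ * (h ^ i * ‖iteratedFDeriv ℝ i g (h • y)‖)
        ≤ (h ^ (2*p))⁻¹ * (h ^ i * (Cg * (h ^ (2*p) / h ^ i * ‖y‖ ^ (((2 * p : ℕ) : ℝ) - i)))) := by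
          gcongr
      _ = Cg * ‖y‖ ^ (((2 * p : ℕ) : ℝ) - i) := by field_simp
      _ = _ := by push_cast; rfl
  have hscd : ContDiffOn ℝ (M:ℕ) s {0}ᶜ := fun y hy => (aux_s_cd hn α M y hy).contDiffWithinAt
  have hopen : IsOpen ({0}ᶜ : Set (Fin n → ℝ)) := isOpen_compl_singleton
  have hGs : ∀ y, y ≠ 0 → ContDiffAt ℝ (M:ℕ) (fun y => G y * s y) y := fun y hy =>
    hGc.contDiffAt.mul (aux_s_cd hn α M y hy)
  have key := hC F ?_ ?_ ?_ ?_
  · -- conclusion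
    have hfun : ∀ y, g (h • y) * aux_s hn α (h • y) =
        (h ^ (2 - (n:ℝ) - α) * h ^ (2*p) * K) * F y := by
      intro y
      rw [aux_s_hom hn α h hh]
      simp only [hF, hG, hs, smul_eq_mul]
      field_simp
    set A : ℝ := h ^ (2 - (n:ℝ) - α) * h ^ (2*p) * K with hA
    have e1 : (∫ x, g x * aux_s hn α x) = h ^ n * (A * ∫ y, F y) := by
      have := Measure.integral_comp_smul volume (fun x : Fin n → ℝ => g x * aux_s hn α x) h
      simp only [hfun] at this
      rw [integral_const_mul] at this
      rw [this]
      simp only [Module.finrank_fin_fun, smul_eq_mul]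
      rw [abs_of_pos (by positivity), mul_inv_cancel_left₀ (by positivity)]
    have e2 : trap h (fun x => g x * aux_s hn α x) = h ^ n * (A * ∑' k : Fin n → ℤ, F (fun i => (k i : ℝ))) := by
      unfold trap
      congr 1
      rw [← tsum_mul_left]
      have e3 : ∀ β : Fin n → ℤ, g (fun j => (β j : ℝ) * h) * aux_s hn α (fun j => (β j : ℝ) * h) =
          A * F (fun i => (β i : ℝ)) := by
        intro β
        rw [← hfun]
        have : (fun j => (β j : ℝ) * h) = h • (fun j => (β j : ℝ)) := by
          funext j; simp [mul_comm]
        rw [this]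
      simp only [e3]
      refine tsum_subtype_eq_of_support_subset (f := fun β : Fin n → ℤ => A * F (fun i => (β i : ℝ)))
        (s := {β | β ≠ 0}) ?_
      intro β hβ h0
      apply hβ
      subst h0
      have : (fun i => (((0 : Fin n → ℤ) i : ℤ) : ℝ)) = (0 : Fin n → ℝ) := by funext i; simp
      simp only [this, hF0, mul_zero]
    change |(∫ x, g x * aux_s hn α x) - trap h (fun x => g x * aux_s hn α x)| ≤ _
    rw [e1, e2, ← mul_sub, ← mul_sub, abs_mul, abs_mul]
    have hA0 : 0 ≤ A := by positivity
    rw [abs_of_nonneg hA0, abs_of_pos (by positivity)]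
    have e4 : h ^ n * A = K * h ^ (2 * (p:ℝ) + 2 - α) := by
      rw [hA, ← Real.rpow_natCast h n, ← Real.rpow_natCast h (2*p), ← mul_assoc, ← mul_assoc,
        ← Real.rpow_add hh, ← Real.rpow_add hh, mul_comm]
      congr 2
      push_cast
      ring
    rw [← mul_assoc, e4]
    have hp0 : 0 ≤ h ^ (2 * (p:ℝ) + 2 - α) := by positivity
    calc K * h ^ (2 * (p:ℝ) + 2 - α) * _ ≤ K * h ^ (2 * (p:ℝ) + 2 - α) * C := by gcongr
      _ ≤ _ := by linarith
  · -- compact support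
    have h1 : HasCompactSupport (fun y => g (h • y)) := by
      have := hgc.comp_homeomorph (Homeomorph.smulOfNeZero (α := Fin n → ℝ) h hh.ne')
      exact this
    refine h1.mono ?_
    intro y hy hy0
    apply hy
    have hy0 : g (h • y) = 0 := hy0
    simp [hF, hG, hy0]
  · intro y hy
    exact (hGs y hy).const_smul K⁻¹
  · intro y hy
    have hy0 : 0 < ‖y‖ := norm_pos_iff.2 hy
    rw [hF, iteratedFDeriv_const_smul_apply' (hGs y hy), norm_smul, Real.norm_of_nonneg (by positivity)]
    have h1 := norm_iteratedFDerivWithin_mul_le (𝕜 := ℝ) (hGc.contDiffOn (s := {0}ᶜ)) hscd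
      hopen.uniqueDiffOn (x := y) hy (n := M) le_rfl
    simp only [iteratedFDerivWithin_of_isOpen _ hopen (show y ∈ ({0}ᶜ : Set (Fin n → ℝ)) from hy)] at h1
    rw [inv_mul_le_iff₀ hK0]
    refine h1.trans ?_
    calc _ ≤ ∑ i ∈ Finset.range (M+1), (M.choose i : ℝ) * ((Cg * Cs) * ‖y‖ ^ (-((n:ℝ) + α))) := by
          refine Finset.sum_le_sum fun i hi => ?_
          have hi' : i ≤ M := by have := Finset.mem_range.1 hi; omega
          rw [mul_assoc]
          refine mul_le_mul_of_nonneg_left ?_ (by positivity)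
          refine (mul_le_mul (hGb i hi' y hy) (hCs (M - i) (by omega) y hy) (norm_nonneg _)
            (by positivity)).trans (le_of_eq ?_)
          have : -((n:ℝ) + α) = (2 * (p:ℝ) - i) + (2 - (n:ℝ) - α - ((M - i : ℕ) : ℝ)) := by
            rw [Nat.cast_sub hi', hM]; push_cast; ring
          rw [this, Real.rpow_add hy0]
          ring
      _ = (∑ i ∈ Finset.range (M+1), (M.choose i : ℝ)) * (Cg * Cs) * ‖y‖ ^ (-((n:ℝ) + α)) := by
          rw [← Finset.sum_mul]; ring
      _ ≤ _ := by gcongr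
  · intro y
    by_cases hy : y = 0
    · rw [hy, hF0, abs_zero]
      positivity
    have hy0 : 0 < ‖y‖ := norm_pos_iff.2 hy
    have h1 := hGb 0 (by omega) y hy
    have h2 := hCs 0 (by omega) y hy
    rw [norm_iteratedFDeriv_zero] at h1 h2
    simp only [hF, smul_eq_mul]
    rw [abs_mul, abs_of_pos (inv_pos.2 hK0), inv_mul_le_iff₀ hK0, abs_mul]
    refine (mul_le_mul h1 h2 (norm_nonneg _) (by positivity)).trans ?_
    have : 2 * (p:ℝ) + 2 - α - n = (2 * (p:ℝ) - ((0:ℕ):ℝ)) + (2 - (n:ℝ) - α - ((0:ℕ):ℝ)) := by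
      push_cast; ring
    rw [this, Real.rpow_add hy0]
    calc _ = (Cg * Cs) * (‖y‖ ^ (2 * (p:ℝ) - ((0:ℕ):ℝ)) * ‖y‖ ^ (2 - (n:ℝ) - α - ((0:ℕ):ℝ))) := by ring
      _ ≤ _ := by gcongr
end

section
/- Let p ≥ 1 and let K ∈ ℝ^{N_p×N_p} be the on-diagonal coefficient matrix, with 𝓘_p ordered so that first come the indices 𝓒₁ = {(0,r) : 0 ≤ r ≤ p} in increasing r, then 𝓒₂ = {(s,0) : 1 ≤ s ≤ p} in increasing s, then the remaining indices 𝓒₃ = {ξ ∈ ℕ² : ξ₁ ≥ 1, ξ₂ ≥ 1, ξ₁+ξ₂ ≤ p}. Then: (1) K_{1,1} = 1 and K_{j,1} = 0 for all 2 ≤ j ≤ N_p; (2) K has the block form K = [[A, B],[0, D]] where A ∈ ℝ^{(2p+1)×(2p+1)} is the block corresponding to 𝓒₁∪𝓒₂, D ∈ ℝ^{(p(p−1)/2)×(p(p−1)/2)} corresponds to 𝓒₃, and the lower-left block is zero, so that det K = det A · det D; and (3) the block A is non-singular. -/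
open MeasureTheory Real

/-- The set `𝓖_γ` of all sign changes of `(γ₁, γ₂)`. -/
def Gon (γ : ℕ × ℕ) : Finset (ℤ × ℤ) :=
  {((γ.1 : ℤ), (γ.2 : ℤ)), (-(γ.1 : ℤ), (γ.2 : ℤ)), ((γ.1 : ℤ), -(γ.2 : ℤ)),
    (-(γ.1 : ℤ), -(γ.2 : ℤ))}

theorem Gon_sum (γ a : ℕ × ℕ) : ∑ β ∈ Gon γ, (β.1 : ℝ) ^ (2 * a.1) * (β.2 : ℝ) ^ (2 * a.2)
    = ((Gon γ).card : ℝ) * ((γ.1 : ℝ) ^ (2 * a.1) * (γ.2 : ℝ) ^ (2 * a.2)) := by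
  rw [Finset.sum_congr rfl (g := fun _ => (γ.1 : ℝ) ^ (2 * a.1) * (γ.2 : ℝ) ^ (2 * a.2))]
  · simp
  · intro β hβ
    simp only [Gon, Finset.mem_insert, Finset.mem_singleton] at hβ
    rcases hβ with h | h | h | h <;> subst h <;> simp [pow_mul]

theorem Gon_card_ne (γ : ℕ × ℕ) : ((Gon γ).card : ℝ) ≠ 0 := by
  have : (Gon γ).Nonempty := ⟨((γ.1 : ℤ), (γ.2 : ℤ)), by simp [Gon]⟩
  exact_mod_cast this.card_pos.ne'

theorem vdm_aux (n k : ℕ) (u : ℕ → ℝ)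
    (h : ∀ s < n, ∑ t ∈ Finset.range n, u t * (((s + k : ℕ) : ℝ)) ^ (2 * t) = 0) :
    ∀ t < n, u t = 0 := by
  have hinj : Function.Injective (fun s : Fin n => (((s : ℕ) + k : ℕ) : ℝ) ^ 2) := by
    intro a b hab
    have := (pow_left_inj₀ (Nat.cast_nonneg _) (Nat.cast_nonneg _) two_ne_zero).1 hab
    have h2 : (a : ℕ) + k = (b : ℕ) + k := by exact_mod_cast this
    exact Fin.ext (by omega)
  have := Matrix.eq_zero_of_forall_index_sum_pow_mul_eq_zero (v := fun t : Fin n => u t) hinj (by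
    intro j
    rw [← h j j.2, Finset.sum_range]
    refine Finset.sum_congr rfl fun i _ => ?_
    rw [pow_mul, mul_comm])
  intro t ht
  exact congrFun this ⟨t, ht⟩

/-- block structure of the on-diagonal coefficient matrix `K` under the
ordering `𝓒₁, 𝓒₂, 𝓒₃` of `𝓘_p`, and non-singularity of the upper-left block `A`. -/
theorem on_diagonal_coefficient_matrix_block_structure
    (p : ℕ) (hp : 1 ≤ p) (Np : ℕ) (hNp : Np = (p + 1) * (p + 2) / 2)
    (hle : 2 * p + 1 ≤ Np)
    (ξ : Fin Np → ℕ × ℕ) (hξinj : Function.Injective ξ)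
    (hξmem : ∀ i, (ξ i).1 + (ξ i).2 ≤ p)
    (hξsurj : ∀ γ : ℕ × ℕ, γ.1 + γ.2 ≤ p → ∃ i, ξ i = γ)
    (hord1 : ∀ i : Fin Np, (i : ℕ) ≤ p → ξ i = (0, (i : ℕ)))
    (hord2 : ∀ i : Fin Np, p + 1 ≤ (i : ℕ) → (i : ℕ) ≤ 2 * p → ξ i = ((i : ℕ) - p, 0))
    (hord3 : ∀ i : Fin Np, 2 * p + 1 ≤ (i : ℕ) → 1 ≤ (ξ i).1 ∧ 1 ≤ (ξ i).2)
    (K : Matrix (Fin Np) (Fin Np) ℝ)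
    (hK : ∀ i j, K i j = ∑ β ∈ Gon (ξ j),
      (β.1 : ℝ) ^ (2 * (ξ i).1) * (β.2 : ℝ) ^ (2 * (ξ i).2)) :
    K ⟨0, by omega⟩ ⟨0, by omega⟩ = 1 ∧
    (∀ j : Fin Np, j ≠ ⟨0, by omega⟩ → K j ⟨0, by omega⟩ = 0) ∧
    (∀ i j : Fin Np, 2 * p + 1 ≤ (i : ℕ) → (j : ℕ) < 2 * p + 1 → K i j = 0) ∧
    Np - (2 * p + 1) = p * (p - 1) / 2 ∧
    K.det =
      (Matrix.of fun i j : Fin (2 * p + 1) =>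
          K (Fin.castLE hle i) (Fin.castLE hle j)).det *
        (Matrix.of fun i j : Fin (Np - (2 * p + 1)) =>
          K ⟨2 * p + 1 + (i : ℕ), by have := i.isLt; omega⟩
            ⟨2 * p + 1 + (j : ℕ), by have := j.isLt; omega⟩).det ∧
    (Matrix.of fun i j : Fin (2 * p + 1) =>
        K (Fin.castLE hle i) (Fin.castLE hle j)).det ≠ 0 := by
  have hK' : ∀ i j, K i j = ((Gon (ξ j)).card : ℝ) *
      (((ξ j).1 : ℝ) ^ (2 * (ξ i).1) * ((ξ j).2 : ℝ) ^ (2 * (ξ i).2)) := fun i j => by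
    rw [hK, Gon_sum]
  have h0 : ξ ⟨0, by omega⟩ = (0, 0) := hord1 ⟨0, by omega⟩ (Nat.zero_le _)
  have hzero : ∀ i j : Fin Np, 2 * p + 1 ≤ (i : ℕ) → (j : ℕ) < 2 * p + 1 → K i j = 0 := by
    intro i j hi hj
    obtain ⟨h1, h2⟩ := hord3 i hi
    rw [hK']
    by_cases hjp : (j : ℕ) ≤ p
    · rw [hord1 j hjp]
      simp [show (ξ i).1 ≠ 0 by omega]
    · rw [hord2 j (by omega) (by omega)]
      simp [show (ξ i).2 ≠ 0 by omega]
  have hcard : Np - (2 * p + 1) = p * (p - 1) / 2 := by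
    obtain ⟨q, rfl⟩ : ∃ q, p = q + 1 := ⟨p - 1, by omega⟩
    have : (q + 1 + 1) * (q + 1 + 2) = (q + 1) * (q + 1 - 1) + 2 * (2 * q + 3) := by
      simp; ring
    omega
  refine ⟨?_, ?_, hzero, hcard, ?_, ?_⟩
  · rw [hK', h0]; simp [Gon]
  · intro j hj
    rw [hK', h0]
    have hne : ξ j ≠ (0, 0) := fun h => hj (hξinj (h.trans h0.symm))
    by_cases h1 : (ξ j).1 = 0
    · have h2 : (ξ j).2 ≠ 0 := fun h => hne (Prod.ext h1 h)
      simp [h2]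
    · simp [h1]
  · let e : Fin (2 * p + 1) ⊕ Fin (Np - (2 * p + 1)) ≃ Fin Np :=
      finSumFinEquiv.trans (finCongr (by omega))
    rw [← Matrix.det_submatrix_equiv_self e K, ← Matrix.fromBlocks_toBlocks (K.submatrix e e)]
    have hz : (K.submatrix e e).toBlocks₂₁ = 0 := by
      ext i j
      refine hzero _ _ ?_ ?_
      · simp [e]
      · simp [e]; omega
    rw [hz, Matrix.det_fromBlocks_zero₂₁]
    rfl
  · intro hdet
    obtain ⟨v, hv, hvA⟩ := Matrix.exists_vecMul_eq_zero_iff.2 hdet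
    apply hv
    let w : ℕ → ℝ := fun n => if h : n < 2 * p + 1 then v ⟨n, h⟩ else 0
    have hw : ∀ i : Fin (2 * p + 1), w i = v i := fun i => dif_pos i.2
    let X : ℕ → ℕ × ℕ := fun n => if n ≤ p then (0, n) else (n - p, 0)
    have hX : ∀ i : Fin (2 * p + 1), ξ (Fin.castLE hle i) = X i := by
      intro i
      by_cases hi : (i : ℕ) ≤ p
      · rw [hord1 _ (by simpa using hi)]; simp [X, hi]
      · rw [hord2 _ (by simp; omega) (by simp; omega)]; simp [X, hi]
    have key : ∀ j < 2 * p + 1, ∑ i ∈ Finset.range (2 * p + 1),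
        w i * (((X j).1 : ℝ) ^ (2 * (X i).1) * ((X j).2 : ℝ) ^ (2 * (X i).2)) = 0 := by
      intro j hj
      have h := congrFun hvA ⟨j, hj⟩
      simp only [Matrix.vecMul, dotProduct, Matrix.of_apply, Pi.zero_apply, hK', hX] at h
      have h' : ((Gon (X j)).card : ℝ) * ∑ i ∈ Finset.range (2 * p + 1),
        w i * (((X j).1 : ℝ) ^ (2 * (X i).1) * ((X j).2 : ℝ) ^ (2 * (X i).2)) = 0 := by
        rw [← h, Finset.sum_range, Finset.mul_sum]
        refine Finset.sum_congr rfl fun i _ => ?_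
        rw [hw]; ring
      exact (mul_eq_zero.1 h').resolve_left (Gon_card_ne _)
    have hX1 : ∀ n ≤ p, X n = (0, n) := fun n hn => by simp [X, hn]
    have hX2 : ∀ n, X (p + 1 + n) = (n + 1, 0) := fun n => by
      simp only [X]; rw [if_neg (by omega)]; congr 1; omega
    rw [show 2 * p + 1 = p + 1 + p by ring] at key
    have hA : ∀ t < p + 1, w t = 0 := by
      apply vdm_aux (p + 1) 0
      intro s hs
      have h := key s (by omega)
      rw [Finset.sum_range_add, Finset.sum_eq_zero (s := Finset.range p), add_zero] at h
      · rw [← h]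
        refine Finset.sum_congr rfl fun i hi => ?_
        rw [hX1 s (by omega), hX1 i (by have := Finset.mem_range.1 hi; omega)]
        simp
      · intro i _
        rw [hX1 s (by omega), hX2]
        simp
    have hB : ∀ t < p, w (p + 1 + t) = 0 := by
      apply vdm_aux p 1 (fun t => w (p + 1 + t))
      intro s hs
      have h := key (p + 1 + s) (by omega)
      rw [Finset.sum_range_add, Finset.sum_eq_zero (s := Finset.range (p + 1)), zero_add] at h
      · have h' : ((s + 1 : ℕ) : ℝ) ^ 2 * ∑ t ∈ Finset.range p,
            w (p + 1 + t) * (((s + 1 : ℕ) : ℝ)) ^ (2 * t) = 0 := by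
          rw [← h, Finset.mul_sum]
          refine Finset.sum_congr rfl fun i hi => ?_
          rw [hX2, hX2]
          simp only [mul_zero, pow_zero, mul_one]
          ring
        exact (mul_eq_zero.1 h').resolve_left (by positivity)
      · intro i hi
        rw [hA i (Finset.mem_range.1 hi), zero_mul]
    funext i
    rw [← hw]
    by_cases hi : (i : ℕ) < p + 1
    · exact hA _ hi
    · have := hB (i - (p + 1)) (by omega)
      rwa [show p + 1 + ((i : ℕ) - (p + 1)) = i by omega] at this
end

section
/- Let p ≥ 2 and fix an enumeration (ξ₁,…,ξ_m) of 𝓒₃ = {ξ ∈ ℕ² : ξ₁ ≥ 1, ξ₂ ≥ 1, ξ₁+ξ₂ ≤ p}, where m = p(p−1)/2. For real variables x₁,…,x_{p−1}, define E ∈ ℝ^{m×m} by E_{ij} = x_{ξ_{j,1}}^{ξ_{i,1}} · x_{ξ_{j,2}}^{ξ_{i,2}}, where ξ_i = (ξ_{i,1}, ξ_{i,2}) and ξ_j = (ξ_{j,1}, ξ_{j,2}). Then there exists a nonzero real constant C (depending only on p and the enumeration) such that for all (x₁,…,x_{p−1}) ∈ ℝ^{p−1}: det E = C · ∏_{1≤j≤p−1}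 x_j^{2(p−j)} · ∏_{1≤i<j≤p−1} (x_j − x_i)^{2(p−j)}. -/
open Polynomial in
noncomputable def newtonQ (x : ℕ → ℝ) (k : ℕ) : ℝ[X] :=
  X * ∏ i ∈ Finset.Ico 1 k, (X - C (x i))

open Polynomial in
theorem newtonQ_eval (x : ℕ → ℝ) (k : ℕ) (a : ℝ) :
    (newtonQ x k).eval a = a * ∏ i ∈ Finset.Ico 1 k, (a - x i) := by
  simp [newtonQ, eval_prod]

open Polynomial in
theorem newtonQ_monic (x : ℕ → ℝ) (k : ℕ) : (newtonQ x k).Monic :=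
  monic_X.mul (monic_prod_of_monic _ _ fun i _ => monic_X_sub_C (x i))

open Polynomial in
theorem newtonQ_natDegree (x : ℕ → ℝ) (k : ℕ) (hk : 1 ≤ k) : (newtonQ x k).natDegree = k := by
  rw [newtonQ, Monic.natDegree_mul monic_X
    (monic_prod_of_monic _ _ fun i _ => monic_X_sub_C (x i)),
    natDegree_prod_of_monic _ _ fun i _ => monic_X_sub_C (x i)]
  simp
  omega

theorem newtonQ_coeff_zero (x : ℕ → ℝ) (k : ℕ) : (newtonQ x k).coeff 0 = 0 := by
  simp [newtonQ]

theorem newtonQ_coeff_lt (x : ℕ → ℝ) (k s : ℕ) (hk : 1 ≤ k) (h : k < s) :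
    (newtonQ x k).coeff s = 0 :=
  Polynomial.coeff_eq_zero_of_natDegree_lt (by rwa [newtonQ_natDegree x k hk])

theorem newtonQ_coeff_self (x : ℕ → ℝ) (k : ℕ) (hk : 1 ≤ k) :
    (newtonQ x k).coeff k = 1 := by
  have := (newtonQ_monic x k).coeff_natDegree
  rwa [newtonQ_natDegree x k hk] at this

theorem newtonQ_eval_zero (x : ℕ → ℝ) (k s : ℕ) (hs : 1 ≤ s) (h : s < k) :
    (newtonQ x k).eval (x s) = 0 := by
  rw [newtonQ_eval, Finset.prod_eq_zero (i := s) (by simp; omega) (by simp), mul_zero]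

theorem det_lower_of_injective {n α : Type*} [Fintype n] [DecidableEq n] [LinearOrder α]
    (f : n → α) (hf : Function.Injective f) (M : Matrix n n ℝ)
    (h : ∀ i j, f i < f j → M i j = 0) : M.det = ∏ i, M i i := by
  let _ : LinearOrder n := LinearOrder.lift' f hf
  convert Matrix.det_of_lowerTriangular M ?_
  intro i j hij
  exact h i j hij

theorem lex_cases (a b : ℕ × ℕ) (h : toLex a < toLex b) : a.1 < b.1 ∨ a.2 < b.2 := by
  rw [Prod.Lex.toLex_lt_toLex] at h
  rcases h with h | h
  · exact Or.inl h
  · exact Or.inr h.2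

theorem prod_first (p m : ℕ) (ξ : Fin m → ℕ × ℕ) (hξinj : Function.Injective ξ)
    (hξmem : ∀ i, 1 ≤ (ξ i).1 ∧ 1 ≤ (ξ i).2 ∧ (ξ i).1 + (ξ i).2 ≤ p)
    (hξsurj : ∀ γ : ℕ × ℕ, 1 ≤ γ.1 → 1 ≤ γ.2 → γ.1 + γ.2 ≤ p → ∃ i, ξ i = γ)
    (g : ℕ → ℝ) : ∏ i, g (ξ i).1 = ∏ k ∈ Finset.Icc 1 (p - 1), g k ^ (p - k) := by
  have h1 : ∀ k ∈ Finset.Icc 1 (p - 1), g k ^ (p - k) = ∏ l ∈ Finset.Icc 1 (p - k), g k := by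
    intro k _
    simp
  rw [Finset.prod_congr rfl h1, Finset.prod_sigma']
  refine Finset.prod_bij (fun i _ => (⟨(ξ i).1, (ξ i).2⟩ : Σ _ : ℕ, ℕ)) ?_ ?_ ?_ ?_
  · intro i _
    have := hξmem i
    simp
    omega
  · intro i _ j _ h
    simp at h
    exact hξinj (Prod.ext h.1 h.2)
  · rintro ⟨k, l⟩ h
    simp at h
    obtain ⟨i, hi⟩ := hξsurj (k, l) (by simp; omega) (by simp; omega) (by simp; omega)
    exact ⟨i, by simp, by simp [hi]⟩
  · intro i _
    rfl

/-- determinant factorization of the monomial matrix `E` built from the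
index set `𝓒₃ = {ξ ∈ ℕ² : ξ₁ ≥ 1, ξ₂ ≥ 1, ξ₁+ξ₂ ≤ p}`. -/
theorem on_diagonal_monomial_determinant
    (p : ℕ) (hp : 2 ≤ p) (m : ℕ) (hm : m = p * (p - 1) / 2)
    (ξ : Fin m → ℕ × ℕ) (hξinj : Function.Injective ξ)
    (hξmem : ∀ i, 1 ≤ (ξ i).1 ∧ 1 ≤ (ξ i).2 ∧ (ξ i).1 + (ξ i).2 ≤ p)
    (hξsurj : ∀ γ : ℕ × ℕ, 1 ≤ γ.1 → 1 ≤ γ.2 → γ.1 + γ.2 ≤ p → ∃ i, ξ i = γ) :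
    ∃ C : ℝ, C ≠ 0 ∧ ∀ x : ℕ → ℝ,
      (Matrix.of fun i j : Fin m =>
          x (ξ j).1 ^ (ξ i).1 * x (ξ j).2 ^ (ξ i).2).det =
        C * (∏ j ∈ Finset.Icc 1 (p - 1), x j ^ (2 * (p - j))) *
          ∏ j ∈ Finset.Icc 1 (p - 1), ∏ i ∈ Finset.Ico 1 j, (x j - x i) ^ (2 * (p - j)) := by
  refine ⟨1, one_ne_zero, fun x => ?_⟩
  set E : Matrix (Fin m) (Fin m) ℝ := Matrix.of fun i j : Fin m =>
          x (ξ j).1 ^ (ξ i).1 * x (ξ j).2 ^ (ξ i).2 with hE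
  let A : Matrix (Fin m) (Fin m) ℝ := Matrix.of fun i j =>
    (newtonQ x (ξ i).1).coeff (ξ j).1 * (newtonQ x (ξ i).2).coeff (ξ j).2
  let N : Matrix (Fin m) (Fin m) ℝ := Matrix.of fun i j =>
    (newtonQ x (ξ i).1).eval (x (ξ j).1) * (newtonQ x (ξ i).2).eval (x (ξ j).2)
  have hlexinj : Function.Injective (fun i => toLex (ξ i)) :=
    fun i j h => hξinj (toLex.injective h)
  have hA : A.det = 1 := by
    rw [det_lower_of_injective (fun i => toLex (ξ i)) hlexinj]
    · apply Finset.prod_eq_one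
      intro i _
      simp [A, newtonQ_coeff_self _ _ (hξmem i).1, newtonQ_coeff_self _ _ (hξmem i).2.1]
    · intro i j h
      rcases lex_cases _ _ h with h | h
      · simp [A, newtonQ_coeff_lt _ _ _ (hξmem i).1 h]
      · simp [A, newtonQ_coeff_lt _ _ _ (hξmem i).2.1 h]
  have hN : N.det = ∏ i, N i i := by
    rw [← Matrix.det_transpose,
      det_lower_of_injective (fun i => toLex (ξ i)) hlexinj]
    · simp
    · intro i j h
      rcases lex_cases _ _ h with h | h
      · simp [N, newtonQ_eval_zero _ _ _ (hξmem i).1 h]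
      · simp [N, newtonQ_eval_zero _ _ _ (hξmem i).2.1 h]
  have hAE : A * E = N := by
    ext i j
    have hi := hξmem i
    rw [Matrix.mul_apply]
    simp only [A, E, N, Matrix.of_apply]
    rw [Polynomial.eval_eq_sum_range' (n := p) (by rw [newtonQ_natDegree _ _ hi.1]; omega),
      Polynomial.eval_eq_sum_range' (n := p) (by rw [newtonQ_natDegree _ _ hi.2.1]; omega),
      Finset.sum_mul_sum, ← Finset.sum_product']
    refine Finset.sum_of_injOn ξ hξinj.injOn ?_ ?_ ?_
    · intro k _
      have := hξmem k
      simp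
      omega
    · rintro ⟨s, t⟩ _ hst
      dsimp only
      by_cases h1 : s = 0
      · simp [h1, newtonQ_coeff_zero]
      by_cases h2 : t = 0
      · simp [h2, newtonQ_coeff_zero]
      by_cases h3 : (ξ i).1 < s
      · simp [newtonQ_coeff_lt _ _ _ hi.1 h3]
      by_cases h4 : (ξ i).2 < t
      · simp [newtonQ_coeff_lt _ _ _ hi.2.1 h4]
      exfalso
      obtain ⟨k, hk⟩ := hξsurj (s, t) (by simp; omega) (by simp; omega) (by simp; omega)
      exact hst ⟨k, by simp, hk⟩
    · intro k _
      ring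
  have hdet : E.det = N.det := by
    rw [← hAE, Matrix.det_mul, hA, one_mul]
  have e1 := prod_first p m ξ hξinj hξmem hξsurj (fun k => (newtonQ x k).eval (x k))
  have e2 := prod_first p m (fun i => (ξ i).swap)
    (fun i j h => hξinj (Prod.swap_injective h))
    (fun i => by have := hξmem i; simp; omega)
    (fun γ h1 h2 h3 => by
      obtain ⟨i, hi⟩ := hξsurj γ.swap h2 h1 (by simp; omega)
      exact ⟨i, by simp [hi]⟩) (fun k => (newtonQ x k).eval (x k))
  simp only [Prod.fst_swap] at e2
  rw [hdet, hN]
  simp only [N, Matrix.of_apply]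
  rw [Finset.prod_mul_distrib, e1, e2, one_mul, ← Finset.prod_mul_distrib,
    ← Finset.prod_mul_distrib]
  refine Finset.prod_congr rfl fun k _ => ?_
  rw [newtonQ_eval, Finset.prod_pow, ← pow_add, ← two_mul, mul_pow]
end
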